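/- arXiv:1609.03049 — 2 statements merged into one kernel-verified Lean document; each statement's English description precedes it below -/
import Mathlib

section
/- The dual F_7^* of the Fano matroid is an excluded minor of \overline{BL}; in particular, there is no graph G with L(G) isomorphic to F_7^*. -/
/-! Graphic matroids are exactly the matroids represented over `GF(2)` by the incidence vectors of
a graph, and if a family of vectors represents `M`, then the dependent sets of the dual of `M` are
the sets containing the nonempty support of a linear functional. So `F₇*` is, up to a labelling of
its elements by `ℤ/7`, the matroid whose circuits are the complements of the lines of the Fano
plane.

* `F₇*` is not graphic: vertex stars are dependent in the dual, so a representing graph would have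
  minimum degree three, hence, having at least five vertices, at least eight edges.
* `F₇*` is not bicircular lift: a circuit of `L(G)` minus an element contains a unique cycle of `G`,
  and two such sets with independent union contain the same cycle. A suitable choice of four of them
  has empty intersection.
* Proper minors: by the cyclic symmetry of the labelling, only one deletion and one contraction
  have to be considered. They are the cycle matroids of a theta graph and of `K₄`.
-/

open Set Matroid

universe u

namespace BLFormal

/-! ### Matroid preliminaries -/

/-- A circuit of a matroid: a minimal dependent set. -/
def Circuit {α : Type u} (M : Matroid α) (C : Set α) : Prop := Minimal M.Dep C

/-- Deletion of a set of elements from a matroid. -/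
def del {α : Type u} (M : Matroid α) (D : Set α) : Matroid α := M ↾ (M.E \ D)

/-- Contraction of a set of elements of a matroid, defined by duality. -/
def con {α : Type u} (M : Matroid α) (C : Set α) : Matroid α := (del M✶ C)✶

/-- `N` is a minor of `M` if it is obtained by a contraction followed by a deletion. -/
def IsMinor {α : Type u} (N M : Matroid α) : Prop := ∃ C D : Set α, N = del (con M C) D

/-- `N` is a proper (strict) minor of `M`. -/
def IsStrictMinor {α : Type u} (N M : Matroid α) : Prop := IsMinor N M ∧ N ≠ M

/-- The rank of a set `X` in the matroid `M`, as an extended natural number: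
the supremum of the cardinalities of the independent subsets of `X`. -/
noncomputable def eRk {α : Type u} (M : Matroid α) (X : Set α) : ℕ∞ :=
  ⨆ I : {I : Set α // M.Indep I ∧ I ⊆ X}, (I : Set α).encard

/-- The rank `r(M)` of a matroid, as an extended natural number. -/
noncomputable def eRank {α : Type u} (M : Matroid α) : ℕ∞ := eRk M M.E

/-- A loop of a matroid. -/
def MLoop {α : Type u} (M : Matroid α) (e : α) : Prop := M.Dep {e}

/-- A coloop of a matroid: a loop of the dual. -/
def MColoop {α : Type u} (M : Matroid α) (e : α) : Prop := MLoop M✶ e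

/-- A `k`-separation of a matroid: a partition `(X, Y)` of the ground set with
`|X|, |Y| ≥ k` and `r(X) + r(Y) - r(M) ≤ k - 1`. -/
def IsKSep {α : Type u} (M : Matroid α) (k : ℕ) (X Y : Set α) : Prop :=
  X ∪ Y = M.E ∧ Disjoint X Y ∧ (k : ℕ∞) ≤ X.encard ∧ (k : ℕ∞) ≤ Y.encard ∧
    eRk M X + eRk M Y ≤ eRank M + ((k - 1 : ℕ) : ℕ∞)

/-- A matroid is connected if it has no 1-separation. -/
def MConnected {α : Type u} (M : Matroid α) : Prop := ¬ ∃ X Y, IsKSep M 1 X Y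

/-- A matroid is 3-connected if it is connected and has no 2-separation. -/
def ThreeConnected {α : Type u} (M : Matroid α) : Prop :=
  MConnected M ∧ ¬ ∃ X Y, IsKSep M 2 X Y

/-- Two elements of a matroid form a series pair if no circuit contains exactly one
of them, and some circuit contains both. -/
def SeriesPair {α : Type u} (M : Matroid α) (e f : α) : Prop :=
  (∀ C, Circuit M C → (e ∈ C ↔ f ∈ C)) ∧ ∃ C, Circuit M C ∧ e ∈ C ∧ f ∈ C

/-- A series class: a maximal set in which every two elements form a series pair. -/
def IsSeriesClass {α : Type u} (M : Matroid α) (S : Set α) : Prop :=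
  Maximal (fun T => T.Nonempty ∧ ∀ e ∈ T, ∀ f ∈ T, SeriesPair M e f) S

/-- `N` is a cosimplification `co(M)` of `M`: it is obtained from `M` by contracting
all coloops and, in each series class, all but one element. -/
def IsCosimplification {α : Type u} (M N : Matroid α) : Prop :=
  ∃ D ⊆ M.E, N = con M D ∧ (∀ e, MColoop M e → e ∈ D) ∧
    ∀ S, IsSeriesClass M S → ∃ x ∈ S, S \ D = {x}

/-- `M` is isomorphic to the uniform matroid `U_{k, n}`: the ground set has `n` elements
and the circuits are precisely the `(k+1)`-element subsets of the ground set. -/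
def IsUnif {α : Type u} (k n : ℕ) (M : Matroid α) : Prop :=
  M.E.encard = n ∧ ∀ C, Circuit M C ↔ C ⊆ M.E ∧ C.encard = k + 1

/-- `M` has a `U_{2,4}`-minor. -/
def HasU24Minor {α : Type u} (M : Matroid α) : Prop := ∃ N, IsMinor N M ∧ IsUnif 2 4 N

/-- `M` is isomorphic to the direct sum `U_{2,4} ⊕ U_{0,1}` of `U_{2,4}` and a loop:
its ground set consists of a 4-element set `X` together with one further element `l`,
and its circuits are `{l}` and the 3-element subsets of `X`. -/
def IsU24PlusLoop {α : Type u} (M : Matroid α) : Prop :=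
  ∃ (X : Set α) (l : α), l ∉ X ∧ M.E = insert l X ∧ X.encard = 4 ∧
    ∀ C, Circuit M C ↔ (C = {l} ∨ (C ⊆ X ∧ C.encard = 3))

/-- `M` is isomorphic to the Fano matroid `F₇`: the rank-3 matroid represented over
`GF(2)` by the seven nonzero vectors of `GF(2)³`. -/
def IsFano {α : Type u} (M : Matroid α) : Prop :=
  ∃ v : α → (Fin 3 → ZMod 2),
    Set.BijOn v M.E {w | w ≠ 0} ∧
    ∀ I ⊆ M.E, (M.Indep I ↔ LinearIndependent (ZMod 2) (fun x : I => v x))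

/-! ### Graphs (with loops and parallel edges allowed) -/

/-- A graph on vertex type `V`, with edge set `E` living in the ambient edge type `α`;
each edge is sent to the unordered pair of its end-vertices. -/
structure Graph (V : Type u) (α : Type u) where
  E : Set α
  inc : α → Sym2 V

namespace Graph

variable {V : Type u} {α : Type u}

/-- The vertices incident with an edge set `C`. -/
def vertsOf (G : Graph V α) (C : Set α) : Set V := {v | ∃ e ∈ C, v ∈ G.inc e}

/-- The vertex set of a graph (we consider graphs without isolated vertices). -/
def verts (G : Graph V α) : Set V := G.vertsOf G.E

/-- Deletion of a set of edges from a graph. -/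
def delete (G : Graph V α) (D : Set α) : Graph V α := ⟨G.E \ D, G.inc⟩

/-- The degree of a vertex `v` in the edge set `C`, with loops counting twice. -/
noncomputable def deg (G : Graph V α) (C : Set α) (v : V) : ℕ :=
  {e ∈ C | v ∈ G.inc e}.ncard + {e ∈ C | G.inc e = Sym2.diag v}.ncard

/-- Two vertices are adjacent via an edge of `C`. -/
def AdjOn (G : Graph V α) (C : Set α) (u v : V) : Prop := ∃ e ∈ C, G.inc e = s(u, v)

/-- The subgraph with edge set `C` is connected. -/
def ConnectedOn (G : Graph V α) (C : Set α) : Prop :=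
  ∀ u ∈ G.vertsOf C, ∀ v ∈ G.vertsOf C, Relation.ReflTransGen (G.AdjOn C) u v

/-- `C` is a cycle of `G` : the edge set of a connected 2-regular subgraph. -/
def IsCycle (G : Graph V α) (C : Set α) : Prop :=
  C ⊆ G.E ∧ C.Finite ∧ C.Nonempty ∧ (∀ v ∈ G.vertsOf C, G.deg C v = 2) ∧ G.ConnectedOn C

/-- A graph is 2-edge-connected if each of its edges lies in a cycle. -/
def TwoEdgeConnected (G : Graph V α) : Prop := ∀ e ∈ G.E, ∃ C, G.IsCycle C ∧ e ∈ C

/-- A graph is connected if it has at least one vertex and any two of its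
vertices are joined by a path. -/
def Connected (G : Graph V α) : Prop := G.verts.Nonempty ∧ G.ConnectedOn G.E

/-- Delete a vertex from a graph (removing all edges incident with it). -/
def delVert (G : Graph V α) (v : V) : Graph V α := ⟨{e ∈ G.E | v ∉ G.inc e}, G.inc⟩

/-- A graph is 2-connected if it is connected and stays connected after the
deletion of any vertex. -/
def TwoConnected (G : Graph V α) : Prop :=
  G.Connected ∧ ∀ v ∈ G.verts, (G.delVert v).Connected

/-- `X` contains at least two (distinct) cycles of `G`. -/
def HasTwoCycles (G : Graph V α) (X : Set α) : Prop :=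
  ∃ C₁ C₂, G.IsCycle C₁ ∧ G.IsCycle C₂ ∧ C₁ ≠ C₂ ∧ C₁ ⊆ X ∧ C₂ ⊆ X

/-- The circuits of the bicircular lift matroid of `G`: edge sets containing at
least two cycles and minimal with this property. -/
def LiftCircuit (G : Graph V α) (X : Set α) : Prop :=
  Minimal (fun Y => Y ⊆ G.E ∧ G.HasTwoCycles Y) X

/-- Two edges of a graph form a series pair if no cycle contains exactly one of
them, and some cycle contains both. -/
def SeriesPair (G : Graph V α) (e f : α) : Prop :=
  (∀ C, G.IsCycle C → (e ∈ C ↔ f ∈ C)) ∧ ∃ C, G.IsCycle C ∧ e ∈ C ∧ f ∈ C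

end Graph

/-- `N` is the bicircular lift matroid `L(G)` of `G` : its ground set is `E(G)`
and its circuits are the lift circuits of `G`. -/
def IsLiftRep {V α : Type u} (G : Graph V α) (N : Matroid α) : Prop :=
  N.E = G.E ∧ ∀ C, Circuit N C ↔ G.LiftCircuit C

/-- `N` is the cycle matroid `M(G)` of `G` : its ground set is `E(G)` and its
circuits are the cycles of `G`. -/
def IsGraphicRep {V α : Type u} (G : Graph V α) (N : Matroid α) : Prop :=
  N.E = G.E ∧ ∀ C, Circuit N C ↔ G.IsCycle C

/-- A matroid is bicircular lift if it is (isomorphic to) `L(G)` for some graph `G`. -/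
def IsBicircularLift {α : Type u} (N : Matroid α) : Prop :=
  ∃ (V : Type u) (G : Graph V α), IsLiftRep G N

/-- A matroid is graphic if it is (isomorphic to) the cycle matroid of some graph. -/
def IsGraphic {α : Type u} (N : Matroid α) : Prop :=
  ∃ (V : Type u) (G : Graph V α), IsGraphicRep G N

/-- The class `BL-bar` of matroids that are graphic or bicircular lift. -/
def InBL {α : Type u} (N : Matroid α) : Prop := IsGraphic N ∨ IsBicircularLift N

/-- `M` is an excluded minor for the class `BL-bar`. -/
def ExcludedMinorBL {α : Type u} (M : Matroid α) : Prop :=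
  ¬ InBL M ∧ ∀ N, IsStrictMinor N M → InBL N

/-! ### Special graphs and subdivisions -/

/-- `G` is (a copy of) the complete graph `K₄`. -/
def IsK4 {V α : Type u} (G : Graph V α) : Prop :=
  ∃ v : Fin 4 → V, Function.Injective v ∧
    ∃ ed : {p : Sym2 (Fin 4) // ¬ p.IsDiag} → α, Function.Injective ed ∧
      G.E = Set.range ed ∧ ∀ p, G.inc (ed p) = Sym2.map v p.1

/-- `G` is (a copy of) the complete graph `K₅`. -/
def IsK5 {V α : Type u} (G : Graph V α) : Prop :=
  ∃ v : Fin 5 → V, Function.Injective v ∧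
    ∃ ed : {p : Sym2 (Fin 5) // ¬ p.IsDiag} → α, Function.Injective ed ∧
      G.E = Set.range ed ∧ ∀ p, G.inc (ed p) = Sym2.map v p.1

/-- `G` is (a copy of) the complete bipartite graph `K₃,₃`. -/
def IsK33 {V α : Type u} (G : Graph V α) : Prop :=
  ∃ a b : Fin 3 → V, Function.Injective a ∧ Function.Injective b ∧
    Set.range a ∩ Set.range b = ∅ ∧
    ∃ ed : Fin 3 × Fin 3 → α, Function.Injective ed ∧
      G.E = Set.range ed ∧ ∀ p, G.inc (ed p) = s(a p.1, b p.2)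

/-- `G` is (a copy of) the graph `K₂ⁿ` with two vertices joined by `n` parallel edges. -/
def IsK2n {V α : Type u} (n : ℕ) (G : Graph V α) : Prop :=
  ∃ u v : V, u ≠ v ∧ ∃ ed : Fin n → α, Function.Injective ed ∧
    G.E = Set.range ed ∧ ∀ i, G.inc (ed i) = s(u, v)

/-- `H` is obtained from `G` by subdividing a single edge. -/
def ElemSub {V α : Type u} (G H : Graph V α) : Prop :=
  ∃ e ∈ G.E, ∃ (f g : α) (u v w : V),
    G.inc e = s(u, v) ∧ w ∉ G.verts ∧ f ≠ g ∧
    f ∉ G.E \ {e} ∧ g ∉ G.E \ {e} ∧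
    H.E = (G.E \ {e}) ∪ {f, g} ∧
    H.inc f = s(u, w) ∧ H.inc g = s(w, v) ∧
    ∀ x ∈ G.E \ {e}, H.inc x = G.inc x

/-- `H` is a subdivision of `G` : it is obtained from `G` by repeatedly
subdividing edges. -/
def IsSubdivision {V α : Type u} (G H : Graph V α) : Prop :=
  Relation.ReflTransGen ElemSub G H

/-! ### 2-sums and simplification -/

/-- `N` is the 2-sum `N₁ ⊕₂ᵉ N₂` of `N₁` and `N₂` along `e`. -/
def Is2Sum {α : Type u} (N N₁ N₂ : Matroid α) (e : α) : Prop :=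
  N₁.E ∩ N₂.E = {e} ∧
  ¬ MLoop N₁ e ∧ ¬ MColoop N₁ e ∧ ¬ MLoop N₂ e ∧ ¬ MColoop N₂ e ∧
  N.E = (N₁.E ∪ N₂.E) \ {e} ∧
  ∀ C, Circuit N C ↔
    ((Circuit N₁ C ∧ e ∉ C) ∨ (Circuit N₂ C ∧ e ∉ C) ∨
      ∃ C₁ C₂, Circuit N₁ C₁ ∧ Circuit N₂ C₂ ∧ e ∈ C₁ ∧ e ∈ C₂ ∧
        C = (C₁ \ {e}) ∪ (C₂ \ {e}))

/-- `H` is a simplification `si(G)` of `G` : it is obtained from `G` by deleting all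
loops and all but one edge of each parallel class. -/
def IsSimplification {V α : Type u} (G H : Graph V α) : Prop :=
  H.inc = G.inc ∧ H.E ⊆ G.E ∧ (∀ e ∈ H.E, ¬ (G.inc e).IsDiag) ∧
    ∀ e ∈ G.E, ¬ (G.inc e).IsDiag → ∃! f, f ∈ H.E ∧ G.inc f = G.inc e

/-- `H` is 2-connected, or is obtained from a 2-connected graph and a single edge `K₂`
by identifying one end-vertex of the edge with a vertex of the 2-connected graph. -/
def TwoConnOrPendant {V α : Type u} (H : Graph V α) : Prop :=
  H.TwoConnected ∨
    ∃ (e : α) (u w : V), e ∈ H.E ∧ H.inc e = s(u, w) ∧ u ≠ w ∧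
      (H.delete {e}).TwoConnected ∧ u ∈ (H.delete {e}).verts ∧ w ∉ (H.delete {e}).verts

lemma exists_subset_minimal {α : Type*} {P : Set α → Prop} {X : Set α} (hX : X.Finite)
    (hPX : P X) : ∃ C ⊆ X, Minimal P C := by
  obtain ⟨C, hCX, hC⟩ := (hX.finite_subsets.subset (sep_subset _ P)).exists_le_minimal
    ⟨Subset.rfl, hPX⟩
  exact ⟨C, hCX, hC.prop.2, fun D hD hDC => hC.2 ⟨hDC.trans hCX, hD⟩ hDC⟩

namespace Graph

variable {V α : Type u} {G : Graph V α} {X Y C : Set α} {e : α} {u v w : V}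

/-! ### Degrees and connectivity -/

lemma vertsOf_mono (h : X ⊆ Y) : G.vertsOf X ⊆ G.vertsOf Y :=
  fun _ ⟨e, he, hv⟩ => ⟨e, h he, hv⟩

lemma vertsOf_union : G.vertsOf (X ∪ Y) = G.vertsOf X ∪ G.vertsOf Y := by
  ext v
  simp only [vertsOf, mem_union, mem_ofPred_eq, or_and_right, exists_or]

lemma vertsOf_nonempty (hX : X.Nonempty) : (G.vertsOf X).Nonempty :=
  let ⟨e, he⟩ := hX
  ⟨_, e, he, (G.inc e).out_fst_mem⟩

lemma finite_vertsOf (hX : X.Finite) : (G.vertsOf X).Finite := by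
  classical
  refine (hX.biUnion fun e _ => (G.inc e).toFinset.finite_toSet).subset ?_
  rintro v ⟨e, he, hv⟩
  exact mem_biUnion he (Sym2.mem_toFinset.2 hv)

lemma deg_coe [DecidableEq V] (Y : Finset α) :
    G.deg Y v = ∑ e ∈ Y, (G.inc e).toMultiset.count v := by
  have count_eq (z : Sym2 V) : z.toMultiset.count v =
      (if v ∈ z then 1 else 0) + if z = Sym2.diag v then 1 else 0 := by
    induction z with
    | _ a b =>
      have : s(a, b) = Sym2.diag v ↔ v = a ∧ v = b := by
        simp only [Sym2.diag, Sym2.eq_iff]; grind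
      change Multiset.count v (a ::ₘ {b}) = _
      rw [Multiset.count_cons, Multiset.count_singleton]
      grind
  have ncard_sep (p : α → Prop) [DecidablePred p] :
      {e ∈ (Y : Set α) | p e}.ncard = ∑ e ∈ Y, if p e then 1 else 0 := by
    rw [← Finset.card_filter, ← Set.ncard_coe_finset, Finset.coe_filter]
    rfl
  rw [deg, ncard_sep, ncard_sep, ← Finset.sum_add_distrib]
  exact Finset.sum_congr rfl fun e _ => by rw [count_eq]

lemma deg_pos_iff (hX : X.Finite) : 0 < G.deg X v ↔ v ∈ G.vertsOf X := by
  classical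
  lift X to Finset α using hX
  simp [deg_coe, Finset.sum_pos_iff, Multiset.count_pos, vertsOf, Sym2.mem_toMultiset]

lemma deg_add_deg_sdiff (hC : C.Finite) (hX : X ⊆ C) :
    G.deg X v + G.deg (C \ X) v = G.deg C v := by
  classical
  lift C to Finset α using hC
  lift X to Finset α using C.finite_toSet.subset hX
  rw [← Finset.coe_sdiff, deg_coe, deg_coe, deg_coe, add_comm,
    Finset.sum_sdiff (Finset.coe_subset.1 hX)]

lemma sum_deg (hX : X.Finite) {S : Finset V} (hS : G.vertsOf X ⊆ S) :
    ∑ v ∈ S, G.deg X v = 2 * X.ncard := by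
  classical
  lift X to Finset α using hX
  have count_edge : ∀ e ∈ X, ∑ v ∈ S, (G.inc e).toMultiset.count v = 2 := fun e he => by
    rw [Multiset.sum_count_eq_card, Sym2.card_toMultiset]
    exact fun v hv => hS ⟨e, he, Sym2.mem_toMultiset.1 hv⟩
  simp only [deg_coe]
  rw [Finset.sum_comm, Finset.sum_congr rfl count_edge, Finset.sum_const, ncard_coe_finset,
    smul_eq_mul, mul_comm]

lemma mul_ncard_le_of_le_deg (hX : X.Finite) {S : Set V} {k : ℕ} (hk : ∀ v ∈ S, k ≤ G.deg X v) :
    k * S.ncard ≤ 2 * X.ncard := by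
  classical
  obtain hS | hS := S.finite_or_infinite
  · lift S to Finset V using hS
    have hsub : G.vertsOf X ⊆ (S ∪ (G.finite_vertsOf hX).toFinset : Finset V) := by simp
    rw [← sum_deg hX hsub, ncard_coe_finset, mul_comm, ← smul_eq_mul]
    exact (Finset.card_nsmul_le_sum _ _ _ hk).trans
      (Finset.sum_le_sum_of_subset Finset.subset_union_left)
  · simp [hS.ncard]

lemma reflTransGen_adjOn_of_mem_inc (he : e ∈ C) (hu : u ∈ G.inc e) (hv : v ∈ G.inc e) :
    Relation.ReflTransGen (G.AdjOn C) u v := by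
  obtain rfl | huv := eq_or_ne u v
  · exact .refl
  · exact .single ⟨e, he, (Sym2.mem_and_mem_iff huv).1 ⟨hu, hv⟩⟩

lemma connectedOn_iff : G.ConnectedOn C ↔ ∀ X ⊆ C, X.Nonempty → (C \ X).Nonempty →
    (G.vertsOf X ∩ G.vertsOf (C \ X)).Nonempty := by
  constructor
  · intro hC X hXC hX hCX
    by_contra! hdisj
    obtain ⟨u, hu⟩ := vertsOf_nonempty (G := G) hX
    obtain ⟨w, hw⟩ := vertsOf_nonempty (G := G) hCX
    have reach_mem {b : V} (h : Relation.ReflTransGen (G.AdjOn C) u b) : b ∈ G.vertsOf X := by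
      induction h with
      | refl => exact hu
      | @tail a b _ hab ha =>
        obtain ⟨e, he, hinc⟩ := hab
        by_cases heX : e ∈ X
        · exact ⟨e, heX, hinc ▸ Sym2.mem_mk_right a b⟩
        · exact (hdisj.le ⟨ha, e, ⟨he, heX⟩, hinc ▸ Sym2.mem_mk_left a b⟩).elim
    exact hdisj.le ⟨reach_mem (hC u (vertsOf_mono hXC hu) w (vertsOf_mono sdiff_subset hw)), hw⟩
  · rintro hC u ⟨f, hf, huf⟩ v ⟨g, hg, hvg⟩
    let X := {e ∈ C | ∃ a ∈ G.inc e, Relation.ReflTransGen (G.AdjOn C) u a}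
    have hCX : C \ X = ∅ := by
      by_contra! hne
      obtain ⟨w, ⟨e, ⟨he, a, ha, hua⟩, hwe⟩, e', ⟨he', heX'⟩, hwe'⟩ :=
        hC X (sep_subset _ _) ⟨f, hf, u, huf, .refl⟩ hne
      exact heX' ⟨he', w, hwe', hua.trans (reflTransGen_adjOn_of_mem_inc he ha hwe)⟩
    obtain ⟨-, a, ha, hua⟩ := sdiff_eq_empty.1 hCX hg
    exact hua.trans (reflTransGen_adjOn_of_mem_inc hg ha hvg)

/-! ### Minimal dense edge sets are cycles -/

/-- A finite nonempty edge set that has at least as many edges as vertices and is minimal with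
this property. Inside the edge set of a graph, these are exactly the cycles. -/
def IsMinimalDense (G : Graph V α) (C : Set α) : Prop :=
  Minimal (fun Y => Y.Finite ∧ Y.Nonempty ∧ (G.vertsOf Y).ncard ≤ Y.ncard) C

namespace IsMinimalDense

lemma finite (hC : G.IsMinimalDense C) : C.Finite := hC.prop.1

lemma nonempty (hC : G.IsMinimalDense C) : C.Nonempty := hC.prop.2.1

lemma ncard_lt_of_ssubset (hC : G.IsMinimalDense C) (hYC : Y ⊂ C) {W : Set V} (hW : W.Finite)
    (hne : W.Nonempty) (hYW : G.vertsOf Y ⊆ W) : Y.ncard < W.ncard := by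
  obtain rfl | hY := Y.eq_empty_or_nonempty
  · simpa using (ncard_pos hW).2 hne
  · by_contra! hWY
    exact hC.not_prop_of_ssubset hYC
      ⟨hC.finite.subset hYC.subset, hY, (ncard_le_ncard hYW hW).trans hWY⟩

lemma ncard_vertsOf (hC : G.IsMinimalDense C) : (G.vertsOf C).ncard = C.ncard := by
  obtain ⟨e, he⟩ := hC.nonempty
  have hlt := hC.ncard_lt_of_ssubset (sdiff_singleton_ssubset.2 he) (finite_vertsOf hC.finite)
    (vertsOf_nonempty hC.nonempty) (vertsOf_mono sdiff_subset)
  have := ncard_sdiff_singleton_add_one he hC.finite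
  have := hC.prop.2.2
  lia

lemma two_le_deg (hC : G.IsMinimalDense C) (hv : v ∈ G.vertsOf C) : 2 ≤ G.deg C v := by
  by_contra! hdeg
  obtain ⟨e, he, hve⟩ := hv
  have hv : v ∈ G.vertsOf C := ⟨e, he, hve⟩
  have deg_e : 0 < G.deg {e} v := (deg_pos_iff (finite_singleton e)).2 ⟨e, rfl, hve⟩
  have deg_add := deg_add_deg_sdiff (G := G) (v := v) hC.finite (singleton_subset_iff.2 he)
  have hv_notMem : v ∉ G.vertsOf (C \ {e}) := fun h =>
    absurd ((deg_pos_iff (hC.finite.subset sdiff_subset)).2 h) (by lia)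
  have hW : (G.vertsOf C \ {v}).Nonempty := by
    by_contra! hW
    have := sum_deg (S := {v}) hC.finite (by simpa using sdiff_eq_empty.1 hW)
    rw [Finset.sum_singleton] at this
    have := (ncard_pos hC.finite).2 hC.nonempty
    lia
  have hlt := hC.ncard_lt_of_ssubset (sdiff_singleton_ssubset.2 he)
    ((finite_vertsOf hC.finite).subset sdiff_subset) hW
    (subset_sdiff_singleton (vertsOf_mono sdiff_subset) hv_notMem)
  have := ncard_sdiff_singleton_add_one he hC.finite
  have := ncard_sdiff_singleton_add_one hv (finite_vertsOf hC.finite)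
  have := hC.ncard_vertsOf
  lia

lemma deg_eq_two (hC : G.IsMinimalDense C) (hv : v ∈ G.vertsOf C) : G.deg C v = 2 := by
  have hV := G.finite_vertsOf hC.finite
  have sum_eq : ∑ v ∈ hV.toFinset, 2 = ∑ v ∈ hV.toFinset, G.deg C v := by
    rw [sum_deg hC.finite hV.coe_toFinset.ge, Finset.sum_const, ← ncard_eq_toFinset_card _ hV,
      hC.ncard_vertsOf, smul_eq_mul, mul_comm]
  exact ((Finset.sum_eq_sum_iff_of_le fun w hw => hC.two_le_deg (hV.mem_toFinset.1 hw)).1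
    sum_eq v (hV.mem_toFinset.2 hv)).symm

lemma connectedOn (hC : G.IsMinimalDense C) : G.ConnectedOn C := by
  refine connectedOn_iff.2 fun X hX hXne hdiff => ?_
  by_contra! hdisj
  have lt_vertsOf {Y : Set α} (hYC : Y ⊂ C) (hY : Y.Nonempty) :
      Y.ncard < (G.vertsOf Y).ncard :=
    hC.ncard_lt_of_ssubset hYC (finite_vertsOf (hC.finite.subset hYC.subset))
      (vertsOf_nonempty hY) Subset.rfl
  have hltX := lt_vertsOf (hX.ssubset_of_not_subset (sdiff_nonempty.1 hdiff)) hXne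
  have hltdiff := lt_vertsOf (sdiff_ssubset_left_iff.2 (by rwa [inter_eq_right.2 hX])) hdiff
  have hcard := ncard_sdiff_add_ncard_of_subset hX hC.finite
  have hverts : (G.vertsOf C).ncard = (G.vertsOf X).ncard + (G.vertsOf (C \ X)).ncard := by
    rw [← ncard_union_eq (disjoint_iff_inter_eq_empty.2 hdisj)
      (finite_vertsOf (hC.finite.subset hX)) (finite_vertsOf (hC.finite.subset sdiff_subset)),
      ← vertsOf_union, union_sdiff_cancel hX]
  have := hC.ncard_vertsOf
  lia

lemma isCycle (hC : G.IsMinimalDense C) (hCE : C ⊆ G.E) : G.IsCycle C :=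
  ⟨hCE, hC.finite, hC.nonempty, fun _ => hC.deg_eq_two, hC.connectedOn⟩

end IsMinimalDense

lemma exists_isCycle_of_ncard_vertsOf_le (hXE : X ⊆ G.E) (hX : X.Finite) (hne : X.Nonempty)
    (hle : (G.vertsOf X).ncard ≤ X.ncard) : ∃ C ⊆ X, G.IsCycle C := by
  obtain ⟨C, hCX, hC⟩ := exists_subset_minimal
    (P := fun Y => Y.Finite ∧ Y.Nonempty ∧ (G.vertsOf Y).ncard ≤ Y.ncard) hX ⟨hX, hne, hle⟩
  exact ⟨C, hCX, IsMinimalDense.isCycle hC (hCX.trans hXE)⟩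

end Graph

/-! ### Incidence vectors over `GF(2)` -/

lemma linearIndepOn_zmod_two_iff {ι W : Type*} [AddCommGroup W] [Module (ZMod 2) W] {w : ι → W}
    {X : Set ι} : LinearIndepOn (ZMod 2) w X ↔
      ∀ T : Finset ι, (T : Set ι) ⊆ X → ∑ i ∈ T, w i = 0 → T = ∅ := by
  rw [linearIndepOn_iff']
  refine ⟨fun h T hT hsum => ?_, fun h T g hT hsum i hi => ?_⟩
  · exact Finset.eq_empty_of_forall_notMem fun i hi =>
      one_ne_zero (h T 1 hT (by simpa using hsum) i hi)
  · have sum_filter : ∑ i ∈ T with g i ≠ 0, w i = 0 := by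
      rw [← hsum, Finset.sum_filter]
      refine Finset.sum_congr rfl fun i _ => ?_
      split_ifs with hg
      · rw [show g i = (1 : ZMod 2) from Fin.eq_one_of_ne_zero _ hg, one_smul]
      · rw [not_not.1 hg, zero_smul]
    have hempty := h _ ((Finset.coe_subset.2 (Finset.filter_subset _ T)).trans hT) sum_filter
    exact not_not.1 (Finset.filter_eq_empty_iff.1 hempty hi)

namespace Graph

variable {V α : Type u} {G : Graph V α} {X C D : Set α} {e : α} {v a b : V}

/-- The column of `e` in the vertex-edge incidence matrix over `GF(2)`: the sum of the unit vectors
of the two ends of `e`, so that loops have column zero. -/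
noncomputable def incVec (G : Graph V α) (e : α) : V →₀ ZMod 2 :=
  Sym2.lift ⟨fun a b => Finsupp.single a 1 + Finsupp.single b 1, fun _ _ => add_comm _ _⟩ (G.inc e)

lemma incVec_of_inc_eq (h : G.inc e = s(a, b)) :
    G.incVec e = Finsupp.single a 1 + Finsupp.single b 1 := by
  rw [incVec, h, Sym2.lift_mk]

lemma incVec_apply [DecidableEq V] : G.incVec e v = ((G.inc e).toMultiset.count v : ZMod 2) := by
  induction h : G.inc e with
  | _ a b =>
    change _ = ((Multiset.count v (a ::ₘ {b}) : ℕ) : ZMod 2)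
    rw [incVec_of_inc_eq h, Finsupp.add_apply, Multiset.count_cons, Multiset.count_singleton,
      Nat.cast_add, add_comm, Finsupp.single_apply, Finsupp.single_apply]
    simp only [Nat.cast_ite, Nat.cast_one, Nat.cast_zero, eq_comm]

lemma sum_incVec_apply (T : Finset α) : (∑ e ∈ T, G.incVec e) v = (G.deg T v : ZMod 2) := by
  classical
  simp only [Finsupp.finsetSum_apply, incVec_apply, deg_coe, Nat.cast_sum]

lemma sum_incVec_eq_zero_iff {T : Finset α} :
    ∑ e ∈ T, G.incVec e = 0 ↔ ∀ v, Even (G.deg T v) := by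
  simp only [Finsupp.ext_iff, sum_incVec_apply, Finsupp.coe_zero, Pi.zero_apply,
    ZMod.natCast_eq_zero_iff_even]

lemma two_le_deg_of_even (hX : X.Finite) (hdeg : Even (G.deg X v)) (hv : v ∈ G.vertsOf X) :
    2 ≤ G.deg X v :=
  Nat.le_of_dvd ((deg_pos_iff hX).2 hv) hdeg.two_dvd

lemma exists_isCycle_of_even_deg (hX : X.Finite) (hXE : X ⊆ G.E) (hne : X.Nonempty)
    (hdeg : ∀ v, Even (G.deg X v)) : ∃ C ⊆ X, G.IsCycle C :=
  exists_isCycle_of_ncard_vertsOf_le hXE hX hne <| Nat.le_of_mul_le_mul_left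
    (mul_ncard_le_of_le_deg hX fun v hv => two_le_deg_of_even hX (hdeg v) hv) two_pos

namespace IsCycle

lemma finite (hC : G.IsCycle C) : C.Finite := hC.2.1

lemma nonempty (hC : G.IsCycle C) : C.Nonempty := hC.2.2.1

lemma even_deg (hC : G.IsCycle C) (v : V) : Even (G.deg C v) := by
  by_cases hv : v ∈ G.vertsOf C
  · rw [hC.2.2.2.1 v hv]
    exact even_two
  · rw [← deg_pos_iff hC.finite, not_lt, Nat.le_zero] at hv
    exact hv ▸ Even.zero

lemma eq_of_even_deg (hC : G.IsCycle C) (hXC : X ⊆ C) (hX : X.Nonempty)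
    (hdeg : ∀ v, Even (G.deg X v)) : X = C := by
  by_contra hne
  have hdiff : (C \ X).Nonempty := sdiff_nonempty.2 fun h => hne (hXC.antisymm h)
  obtain ⟨v, hvX, hvdiff⟩ := connectedOn_iff.1 hC.2.2.2.2 X hXC hX hdiff
  have two_le := two_le_deg_of_even (hC.finite.subset hXC) (hdeg v) hvX
  have pos := (deg_pos_iff (hC.finite.subset sdiff_subset)).2 hvdiff
  have deg_add := deg_add_deg_sdiff (G := G) (v := v) hC.finite hXC
  rw [hC.2.2.2.1 v (vertsOf_mono hXC hvX)] at deg_add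
  lia

lemma eq_of_subset (hC : G.IsCycle C) (hD : G.IsCycle D) (hDC : D ⊆ C) : D = C :=
  hC.eq_of_even_deg hDC hD.nonempty hD.even_deg

lemma sum_incVec {T : Finset α} (hT : G.IsCycle T) : ∑ e ∈ T, G.incVec e = 0 :=
  sum_incVec_eq_zero_iff.2 hT.even_deg

end IsCycle

lemma exists_isCycle_of_sum_incVec_eq_zero {T : Finset α} (hTE : (T : Set α) ⊆ G.E)
    (hne : T.Nonempty) (hsum : ∑ e ∈ T, G.incVec e = 0) : ∃ C ⊆ (T : Set α), G.IsCycle C :=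
  exists_isCycle_of_even_deg T.finite_toSet hTE hne (sum_incVec_eq_zero_iff.1 hsum)

lemma linearIndepOn_incVec_iff (hX : X ⊆ G.E) :
    LinearIndepOn (ZMod 2) G.incVec X ↔ ∀ C ⊆ X, ¬ G.IsCycle C := by
  rw [linearIndepOn_zmod_two_iff]
  constructor
  · intro h C hCX hC
    obtain ⟨T, rfl⟩ := hC.finite.exists_finset_coe
    exact hC.nonempty.ne_empty (Finset.coe_eq_empty.2 (h T hCX hC.sum_incVec))
  · intro h T hTX hsum
    by_contra! hne
    obtain ⟨C, hCT, hC⟩ := exists_isCycle_of_sum_incVec_eq_zero (hTX.trans hX) hne hsum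
    exact h C (hCT.trans hTX) hC

-- If both cycles use `d`, their symmetric difference avoids it and has even degrees.
lemma HasTwoCycles.exists_isCycle_subset_sdiff_singleton (h : G.HasTwoCycles X) (d : α) :
    ∃ C ⊆ X \ {d}, G.IsCycle C := by
  classical
  obtain ⟨C, D, hC, hD, hne, hCX, hDX⟩ := h
  by_cases hdC : d ∉ C
  · exact ⟨C, subset_sdiff_singleton hCX hdC, hC⟩
  by_cases hdD : d ∉ D
  · exact ⟨D, subset_sdiff_singleton hDX hdD, hD⟩
  obtain ⟨S, rfl⟩ := hC.finite.exists_finset_coe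
  obtain ⟨T, rfl⟩ := hD.finite.exists_finset_coe
  rw [not_not, Finset.mem_coe] at hdC hdD
  have sum_zero : ∑ e ∈ symmDiff S T, G.incVec e = 0 := by
    have hS := Finset.sum_inter_add_sum_sdiff S T G.incVec
    have hT := Finset.sum_inter_add_sum_sdiff T S G.incVec
    rw [hC.sum_incVec] at hS
    rw [hD.sum_incVec, Finset.inter_comm] at hT
    rw [symmDiff_def, Finset.sup_eq_union, Finset.sum_union disjoint_sdiff_sdiff,
      eq_neg_of_add_eq_zero_right hS, eq_neg_of_add_eq_zero_right hT]
    exact ZModModule.add_self _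
  have sub_union : (symmDiff S T : Finset α) ⊆ (S ∪ T : Finset α) := symmDiff_le_sup
  rw [← Finset.coe_subset, Finset.coe_union] at sub_union
  obtain ⟨Z, hZ, hZcyc⟩ := exists_isCycle_of_sum_incVec_eq_zero
    (sub_union.trans (union_subset hC.1 hD.1))
    (Finset.nonempty_iff_ne_empty.2 fun h => hne (congrArg _ (symmDiff_eq_bot.1 h))) sum_zero
  have hd : d ∉ symmDiff S T := by simp [Finset.mem_symmDiff, hdC, hdD]
  exact ⟨Z, hZ.trans (subset_sdiff_singleton (sub_union.trans (union_subset hCX hDX)) hd), hZcyc⟩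

end Graph

/-! ### Linear representations of matroids -/

/-- The family of vectors `w` represents the matroid `M` over the field `K`. The vectors of elements
outside the ground set are irrelevant. -/
def IsRep {α W : Type*} (K : Type*) [Field K] [AddCommGroup W] [Module K W] (M : Matroid α)
    (w : α → W) : Prop :=
  ∀ I ⊆ M.E, (M.Indep I ↔ LinearIndepOn K w I)

namespace IsRep

open Submodule

variable {α K W W' : Type*} [Field K] [AddCommGroup W] [Module K W] [AddCommGroup W'] [Module K W']
  {M : Matroid α} {w : α → W} {I X C : Set α} {x : α}

lemma linearIndepOn (hM : IsRep K M w) (hI : M.Indep I) : LinearIndepOn K w I :=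
  (hM I hI.subset_ground).1 hI

lemma delete (hM : IsRep K M w) (D : Set α) : IsRep K (M ＼ D) w := fun I hI => by
  rw [delete_ground, subset_sdiff] at hI
  rw [delete_indep_iff, and_iff_left hI.2, hM I hI.1]

lemma span_image_eq_of_isBasis (hM : IsRep K M w) (hIX : M.IsBasis I X) :
    span K (w '' I) = span K (w '' X) := by
  refine (span_mono (image_mono hIX.subset)).antisymm (span_le.2 ?_)
  rintro _ ⟨x, hx, rfl⟩
  by_contra hspan
  have hxI : x ∉ I := fun h => hspan (subset_span (mem_image_of_mem w h))
  have hindep : M.Indep (insert x I) :=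
    (hM _ (insert_subset (hIX.subset_ground hx) hIX.indep.subset_ground)).2
      ((linearIndepOn_insert hxI).2 ⟨hM.linearIndepOn hIX.indep, hspan⟩)
  exact hxI (hIX.mem_of_insert_indep hx hindep)

lemma mem_closure_iff (hM : IsRep K M w) (hX : X ⊆ M.E) (hx : x ∈ M.E) :
    x ∈ M.closure X ↔ w x ∈ span K (w '' X) := by
  obtain ⟨I, hI⟩ := M.exists_isBasis X
  rw [← hI.closure_eq_closure, hI.indep.mem_closure_iff', and_iff_right hx,
    hM _ (insert_subset hx hI.indep.subset_ground), linearIndepOn_insert_iff,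
    and_iff_right (hM.linearIndepOn hI.indep), hM.span_image_eq_of_isBasis hI]
  by_cases hxI : x ∈ I
  · simp only [hxI, implies_true, true_iff]
    exact subset_span (mem_image_of_mem w (hI.subset hxI))
  · simp only [hxI, imp_false, not_not]

lemma contract (hM : IsRep K M w) (hC : C ⊆ M.E) {g : W →ₗ[K] W'}
    (hg : LinearMap.ker g = span K (w '' C)) : IsRep K (M ／ C) (g ∘ w) := fun J hJ => by
  obtain ⟨I, hI⟩ := M.exists_isBasis C
  rw [contract_ground, subset_sdiff] at hJ
  rw [← hM.span_image_eq_of_isBasis hI] at hg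
  let q := (span K (w '' I)).liftQ g hg.ge
  have hq : LinearMap.ker q = ⊥ := ker_liftQ_eq_bot _ _ _ hg.le
  have hJI : J ∪ I ⊆ M.E := union_subset hJ.1 hI.indep.subset_ground
  have hindep : LinearIndepOn K (g ∘ w) J ↔ LinearIndepOn K (mkQ (span K (w '' I)) ∘ w) J :=
    q.linearIndependent_iff (v := fun x : J => mkQ _ (w x)) hq
  rw [hI.contract_indep_iff, and_iff_left hJ.2.symm, hM _ hJI, hindep, union_comm,
    (hM.linearIndepOn hI.indep).quotient_iff_union (hJ.2.symm.mono_left hI.subset)]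

-- The circuits of the dual are the minimal nonempty supports of linear functionals.
lemma dual_dep_iff (hM : IsRep K M w) : M✶.Dep X ↔ X ⊆ M.E ∧ ∃ φ : Module.Dual K W,
    {x ∈ M.E | φ (w x) ≠ 0}.Nonempty ∧ {x ∈ M.E | φ (w x) ≠ 0} ⊆ X := by
  rw [dep_iff, and_comm, dual_ground]
  refine and_congr_right fun hX => ?_
  have hdual : M✶.Indep X ↔ M.E ⊆ M.closure (M.E \ X) := by
    rw [← coindep_def, coindep_iff_closure_compl_eq_ground hX]
    exact ⟨fun h => h.ge, (M.closure_subset_ground _).antisymm⟩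
  rw [hdual, not_subset]
  constructor
  · rintro ⟨x, hx, hspan⟩
    rw [hM.mem_closure_iff sdiff_subset hx] at hspan
    obtain ⟨φ, hφx, hφ⟩ := exists_le_ker_of_notMem hspan
    refine ⟨φ, ⟨x, hx, hφx⟩, fun y ⟨hy, hφy⟩ => ?_⟩
    by_contra hyX
    exact hφy (hφ (subset_span (mem_image_of_mem w ⟨hy, hyX⟩)))
  · rintro ⟨φ, ⟨x, hx, hφx⟩, hφX⟩
    refine ⟨x, hx, fun hcl => hφx ?_⟩
    rw [hM.mem_closure_iff sdiff_subset hx] at hcl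
    have hker : span K (w '' (M.E \ X)) ≤ LinearMap.ker φ := by
      rw [span_le, image_subset_iff]
      exact fun y hy => of_not_not fun hφy => hy.2 (hφX ⟨hy.1, hφy⟩)
    exact hker hcl

end IsRep

/-! ### Minors of graphic matroids -/

lemma isGraphicRep_iff {V α : Type u} {G : Graph V α} {M : Matroid α} :
    IsGraphicRep G M ↔ M.E = G.E ∧ IsRep (ZMod 2) M G.incVec := by
  refine and_congr_right fun hE => ⟨fun h I hI => ?_, fun h C => ?_⟩
  · rw [Graph.linearIndepOn_incVec_iff (hE ▸ hI), indep_iff_forall_subset_not_isCircuit hI]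
    exact forall₂_congr fun C _ => not_congr (h C)
  have dep_iff {X : Set α} : M.Dep X ↔ X ⊆ M.E ∧ ∃ C ⊆ X, G.IsCycle C := by
    rw [Matroid.dep_iff, and_comm]
    refine and_congr_right fun hX => ?_
    rw [h X hX, Graph.linearIndepOn_incVec_iff (hE ▸ hX)]
    push Not
    rfl
  constructor
  · intro hC
    obtain ⟨D, hDC, hD⟩ := (dep_iff.1 hC.prop).2
    exact hC.eq_of_subset (dep_iff.2 ⟨hE ▸ hD.1, D, Subset.rfl, hD⟩) hDC ▸ hD
  · intro hC
    refine ⟨dep_iff.2 ⟨hE ▸ hC.1, C, Subset.rfl, hC⟩, fun X hX hXC => ?_⟩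
    obtain ⟨D, hDX, hD⟩ := (dep_iff.1 hX).2
    exact (hC.eq_of_subset hD (hDX.trans hXC)).ge.trans hDX

lemma ker_lmapDomain_quotMk {V R : Type*} [Ring R] (r : V → V → Prop) :
    LinearMap.ker (Finsupp.lmapDomain R R (Quot.mk r)) =
      Submodule.span R {x | ∃ a b, r a b ∧ x = Finsupp.single a 1 - Finsupp.single b 1} := by
  set S := Submodule.span R {x : V →₀ R | ∃ a b, r a b ∧
    x = Finsupp.single a 1 - Finsupp.single b 1}
  refine le_antisymm ?_ (Submodule.span_le.2 ?_)
  · let f : Quot r → (V →₀ R) ⧸ S := Quot.lift (fun a => S.mkQ (Finsupp.single a 1)) fun a b hab =>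
      (Submodule.Quotient.eq S).2 (Submodule.subset_span ⟨a, b, hab, rfl⟩)
    have hf : Finsupp.linearCombination R f ∘ₗ Finsupp.lmapDomain R R (Quot.mk r) = S.mkQ := by
      ext a
      simp [f]
    exact (LinearMap.ker_le_ker_comp _ _).trans_eq (by rw [hf, Submodule.ker_mkQ])
  · rintro _ ⟨a, b, hab, rfl⟩
    rw [SetLike.mem_coe, LinearMap.mem_ker, map_sub, Finsupp.lmapDomain_apply,
      Finsupp.lmapDomain_apply, Finsupp.mapDomain_single, Finsupp.mapDomain_single, Quot.sound hab,
      sub_self]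

namespace Graph

variable {V α : Type u}

/-- Contraction of a set of edges: adjacent vertices of the contracted edge set are identified. -/
def contract (G : Graph V α) (C : Set α) : Graph (Quot (G.AdjOn C)) α :=
  ⟨G.E \ C, fun e => (G.inc e).map (Quot.mk _)⟩

lemma incVec_contract (G : Graph V α) (C : Set α) : (G.contract C).incVec =
    Finsupp.lmapDomain (ZMod 2) (ZMod 2) (Quot.mk (G.AdjOn C)) ∘ G.incVec := by
  ext1 e
  induction h : G.inc e with
  | _ a b =>
    have hinc : (G.contract C).inc e = s(Quot.mk _ a, Quot.mk _ b) :=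
      congrArg (Sym2.map (Quot.mk _)) h
    rw [Function.comp_apply, incVec_of_inc_eq hinc, incVec_of_inc_eq h, map_add,
      Finsupp.lmapDomain_apply, Finsupp.lmapDomain_apply, Finsupp.mapDomain_single,
      Finsupp.mapDomain_single]

lemma ker_lmapDomain_adjOn (G : Graph V α) (C : Set α) :
    LinearMap.ker (Finsupp.lmapDomain (ZMod 2) (ZMod 2) (Quot.mk (G.AdjOn C))) =
      Submodule.span (ZMod 2) (G.incVec '' C) := by
  rw [ker_lmapDomain_quotMk]
  congr 1
  ext x
  constructor
  · rintro ⟨a, b, ⟨e, he, hinc⟩, rfl⟩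
    exact ⟨e, he, by rw [incVec_of_inc_eq hinc, ZModModule.sub_eq_add]⟩
  · rintro ⟨e, he, rfl⟩
    induction h : G.inc e with
    | _ a b => exact ⟨a, b, ⟨e, he, h⟩, by rw [incVec_of_inc_eq h, ZModModule.sub_eq_add]⟩

end Graph

namespace IsGraphic

variable {α : Type u} {M : Matroid α}

lemma delete (hM : IsGraphic M) (D : Set α) : IsGraphic (M ＼ D) := by
  obtain ⟨V, G, hG⟩ := hM
  obtain ⟨hE, hrep⟩ := isGraphicRep_iff.1 hG
  exact ⟨V, G.delete D, isGraphicRep_iff.2 ⟨congrArg (· \ D) hE, hrep.delete D⟩⟩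

lemma contract (hM : IsGraphic M) (C : Set α) : IsGraphic (M ／ C) := by
  obtain ⟨V, G, hG⟩ := hM
  obtain ⟨hE, hrep⟩ := isGraphicRep_iff.1 hG
  rw [← contract_inter_ground_eq]
  refine ⟨_, G.contract (C ∩ M.E), isGraphicRep_iff.2 ⟨congrArg (· \ (C ∩ M.E)) hE, ?_⟩⟩
  rw [G.incVec_contract]
  exact hrep.contract inter_subset_right (G.ker_lmapDomain_adjOn _)

end IsGraphic

lemma isGraphic_of_isStrictMinor {α : Type u} {M N : Matroid α}
    (hdel : ∀ e ∈ M.E, IsGraphic (M ＼ {e})) (hcon : ∀ e ∈ M.E, IsGraphic (M ／ {e}))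
    (hN : IsStrictMinor N M) : IsGraphic N := by
  obtain ⟨⟨C, D, hCD⟩, hne⟩ := hN
  replace hCD : N = M ／ C ＼ D := hCD
  rw [← contract_inter_ground_eq, ← delete_inter_ground_eq] at hCD
  obtain hC | ⟨e, heC, he⟩ := (C ∩ M.E).eq_empty_or_nonempty
  · rw [hC, contract_empty] at hCD
    obtain hD | ⟨e, heD, he⟩ := (D ∩ M.E).eq_empty_or_nonempty
    · exact absurd (by rw [hCD, hD, delete_empty]) hne
    · rw [hCD, ← insert_eq_of_mem (mem_inter heD he), insert_eq, ← delete_delete]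
      exact (hdel e he).delete _
  · rw [hCD, ← insert_eq_of_mem (mem_inter heC he), insert_eq, ← contract_contract]
    exact ((hcon e he).contract _).delete _

namespace Graph

variable {V α : Type u} {G : Graph V α} {I X : Set α} {e : α} {v : V}

lemma mem_inc_of_incVec_apply_ne_zero (h : G.incVec e v ≠ 0) : v ∈ G.inc e := by
  classical
  rw [incVec_apply] at h
  exact Sym2.mem_toMultiset.1 (Multiset.count_ne_zero.1 fun h0 => h (by rw [h0, Nat.cast_zero]))

lemma incVec_apply_ne_zero (h : G.incVec e ≠ 0) (hv : v ∈ G.inc e) : G.incVec e v ≠ 0 := by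
  obtain ⟨w, hw⟩ := hv
  have hvw : v ≠ w := by
    rintro rfl
    exact h (by rw [incVec_of_inc_eq hw]; exact ZModModule.add_self _)
  rw [incVec_of_inc_eq hw]
  simp [hvw]

lemma ncard_add_one_le_ncard_vertsOf (hI : LinearIndepOn (ZMod 2) G.incVec I) (hIE : I ⊆ G.E)
    (hfin : I.Finite) (hne : I.Nonempty) : I.ncard + 1 ≤ (G.vertsOf I).ncard := by
  by_contra! hlt
  obtain ⟨C, hCI, hC⟩ :=
    exists_isCycle_of_ncard_vertsOf_le hIE hfin hne (Nat.le_of_lt_succ hlt)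
  exact (linearIndepOn_incVec_iff hIE).1 hI C hCI hC

lemma ncard_incVec_apply_ne_zero_le_deg (hX : X.Finite) :
    {e ∈ X | G.incVec e v ≠ 0}.ncard ≤ G.deg X v :=
  calc {e ∈ X | G.incVec e v ≠ 0}.ncard
    _ ≤ {e ∈ X | v ∈ G.inc e}.ncard := ncard_le_ncard
        (fun _ he => ⟨he.1, mem_inc_of_incVec_apply_ne_zero he.2⟩) (hX.subset (sep_subset _ _))
    _ ≤ G.deg X v := Nat.le_add_right _ _

end Graph

lemma IsGraphic.three_mul_ncard_add_one_le {α : Type u} {M : Matroid α} [M.Finite]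
    (hM : IsGraphic M) (hcard : ∀ T, M✶.Dep T → 3 ≤ T.ncard) {I : Set α} (hI : M.Indep I)
    (hne : I.Nonempty) : 3 * (I.ncard + 1) ≤ 2 * M.E.ncard := by
  obtain ⟨V, G, hG⟩ := hM
  obtain ⟨hE, hrep⟩ := isGraphicRep_iff.1 hG
  have hindep := hrep.linearIndepOn hI
  have three_le_deg : ∀ v ∈ G.vertsOf I, 3 ≤ G.deg M.E v := by
    rintro v ⟨e, he, hve⟩
    have star_dep : M✶.Dep {e ∈ M.E | G.incVec e v ≠ 0} := hrep.dual_dep_iff.2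
      ⟨sep_subset _ _, Finsupp.lapply v,
        ⟨e, hI.subset_ground he, Graph.incVec_apply_ne_zero (hindep.ne_zero he) hve⟩, Subset.rfl⟩
    exact (hcard _ star_dep).trans (Graph.ncard_incVec_apply_ne_zero_le_deg M.ground_finite)
  calc 3 * (I.ncard + 1)
    _ ≤ 3 * (G.vertsOf I).ncard := Nat.mul_le_mul_left 3 <|
        Graph.ncard_add_one_le_ncard_vertsOf hindep (hE ▸ hI.subset_ground)
          (M.set_finite I hI.subset_ground) hne
    _ ≤ 2 * M.E.ncard := Graph.mul_ncard_le_of_le_deg M.ground_finite three_le_deg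

namespace IsFano

variable {α : Type u} {F : Matroid α} {I T : Set α}

lemma ncard_ground (hF : IsFano F) : F.E.ncard = 7 := by
  obtain ⟨v, hv, -⟩ := hF
  rw [← hv.injOn.ncard_image, hv.image_eq, ncard_eq_toFinset_card']
  decide

lemma finite (hF : IsFano F) : F.Finite :=
  ⟨finite_of_ncard_pos (by rw [hF.ncard_ground]; norm_num)⟩

lemma ncard_le_three_of_indep (hF : IsFano F) (hI : F.Indep I) : I.ncard ≤ 3 := by
  obtain ⟨v, -, hv⟩ := hF
  have hrank := LinearIndepOn.encard_le_toENat_rank ((hv I hI.subset_ground).1 hI)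
  rw [rank_fin_fun] at hrank
  exact ENat.toNat_le_of_le_natCast (by simpa using hrank)

lemma three_le_ncard_of_dep (hF : IsFano F) (hT : F.Dep T) : 3 ≤ T.ncard := by
  classical
  have := hF.finite
  obtain ⟨v, hv, hrep⟩ := hF
  by_contra! hlt
  refine hT.not_indep ((hrep T hT.subset_ground).2 ?_)
  refine linearIndepOn_zmod_two_iff.2 fun S hST hsum => ?_
  have hSE := hST.trans hT.subset_ground
  have hcard : S.card ≤ 2 := by
    rw [← ncard_coe_finset]
    exact (ncard_le_ncard hST (F.set_finite T hT.subset_ground)).trans (Nat.le_of_lt_succ hlt)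
  interval_cases hS : S.card
  · exact Finset.card_eq_zero.1 hS
  · obtain ⟨a, rfl⟩ := Finset.card_eq_one.1 hS
    rw [Finset.sum_singleton] at hsum
    exact absurd hsum (hv.mapsTo (hSE (by simp)))
  · obtain ⟨a, b, hab, rfl⟩ := Finset.card_eq_two.1 hS
    rw [Finset.sum_pair hab, ← ZModModule.sub_eq_add, sub_eq_zero] at hsum
    exact absurd (hv.injOn (hSE (by simp)) (hSE (by simp)) hsum) hab

lemma not_isGraphic_dual (hF : IsFano F) : ¬ IsGraphic F✶ := by
  intro hgraphic
  have := hF.finite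
  obtain ⟨B, hB⟩ := F.exists_isBase
  have hcard := ncard_sdiff_add_ncard_of_subset hB.subset_ground F.ground_finite
  have hB_le := hF.ncard_le_three_of_indep hB.indep
  have hE := hF.ncard_ground
  have hne : (F.E \ B).Nonempty := nonempty_of_ncard_ne_zero (by lia)
  have hle := hgraphic.three_mul_ncard_add_one_le (fun T hT => hF.three_le_ncard_of_dep
    (F.dual_dual ▸ hT)) hB.compl_isBase_dual.indep hne
  rw [dual_ground] at hle
  lia

end IsFano

/-! ### Labelling the elements of the dual Fano matroid -/

/-- The lines of the Fano plane: the translates of the perfect difference set `{0, 1, 3}` modulo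
seven. -/
def fanoLine (i : Fin 7) : Finset (Fin 7) := {i, i + 1, i + 3}

/-- The points of the Fano plane as vectors, in an order that makes each `fanoLine i` a line: the
powers of a root of `x³ + x + 1` in the field with eight elements. -/
def fanoVec : Fin 7 → Fin 3 → ZMod 2 :=
  ![![1, 0, 0], ![0, 1, 0], ![0, 0, 1], ![1, 1, 0], ![0, 1, 1], ![1, 1, 1], ![1, 0, 1]]

lemma bijOn_fanoVec : BijOn fanoVec univ {w | w ≠ 0} := by
  refine ⟨?_, ?_, ?_⟩
  · simp only [MapsTo, mem_univ, true_imp_iff, mem_ofPred_eq]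
    decide
  · rw [injOn_univ]
    unfold Function.Injective
    decide
  · simp only [SurjOn, subset_def, mem_image, mem_univ, true_and, mem_ofPred_eq]
    decide

lemma exists_fanoLine_eq_orthogonal : ∀ a : Fin 3 → ZMod 2, (∃ j, a ⬝ᵥ fanoVec j ≠ 0) →
    ∃ i, ∀ j, a ⬝ᵥ fanoVec j ≠ 0 ↔ j ∉ fanoLine i := by
  decide +kernel

lemma exists_orthogonal_eq_fanoLine : ∀ i, ∃ a : Fin 3 → ZMod 2,
    ∀ j, a ⬝ᵥ fanoVec j ≠ 0 ↔ j ∉ fanoLine i := by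
  decide +kernel

/-- A bijection between the ground set of `N` and the points of the Fano plane under which the
circuits of `N` are the complements of the lines. It identifies `N` with the dual Fano matroid. -/
structure IsFanoDualLabelling {α : Type u} (N : Matroid α) (ℓ : α → Fin 7) : Prop where
  bijOn : BijOn ℓ N.E univ
  dep_iff : ∀ X ⊆ N.E, N.Dep X ↔ ∃ i, ((fanoLine i)ᶜ : Set (Fin 7)) ⊆ ℓ '' X

lemma IsFano.exists_isFanoDualLabelling {α : Type u} {F : Matroid α} (hF : IsFano F) :
    ∃ ℓ, IsFanoDualLabelling F✶ ℓ := by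
  obtain ⟨v, hv, hrep⟩ := hF
  replace hrep : IsRep (ZMod 2) F v := hrep
  have hinv := bijOn_fanoVec.invOn_invFunOn
  let ℓ := Function.invFunOn fanoVec univ ∘ v
  have hℓ : BijOn ℓ F.E univ :=
    (hinv.symm.bijOn bijOn_fanoVec.surjOn.mapsTo_invFunOn bijOn_fanoVec.mapsTo).comp hv
  have fanoVec_ℓ : ∀ x ∈ F.E, fanoVec (ℓ x) = v x := fun x hx => hinv.2 (hv.mapsTo hx)
  refine ⟨ℓ, hℓ, fun X hX => ?_⟩
  rw [dual_ground] at hX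
  rw [hrep.dual_dep_iff, and_iff_right hX, (dotProductEquiv (ZMod 2) (Fin 3)).surjective.exists]
  simp only [dotProductEquiv_apply_apply]
  constructor
  · rintro ⟨a, ⟨x, hx, hax⟩, hsupp⟩
    obtain ⟨i, hi⟩ := exists_fanoLine_eq_orthogonal a ⟨ℓ x, by rwa [fanoVec_ℓ x hx]⟩
    refine ⟨i, fun j hj => ?_⟩
    obtain ⟨y, hy, rfl⟩ := hℓ.surjOn (mem_univ j)
    exact ⟨y, hsupp ⟨hy, fanoVec_ℓ y hy ▸ (hi _).2 hj⟩, rfl⟩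
  · rintro ⟨i, hi⟩
    obtain ⟨a, ha⟩ := exists_orthogonal_eq_fanoLine i
    obtain ⟨x, hx, hxi⟩ := hℓ.surjOn (mem_univ (i + 2))
    have add_two_notMem : ∀ i, i + 2 ∉ fanoLine i := by decide
    refine ⟨a, ⟨x, hx, ?_⟩, fun y ⟨hy, hay⟩ => ?_⟩
    · rw [← fanoVec_ℓ x hx, ha, hxi]
      exact add_two_notMem i
    · rw [← fanoVec_ℓ y hy, ha] at hay
      exact (hℓ.injOn.mem_image_iff hX hy).1 (hi hay)

namespace IsFanoDualLabelling

variable {α : Type u} {N : Matroid α} {ℓ : α → Fin 7}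

lemma dep_preimage_iff (hℓ : IsFanoDualLabelling N ℓ) (S : Finset (Fin 7)) :
    N.Dep (N.E ∩ ℓ ⁻¹' S) ↔ ∃ i, (fanoLine i)ᶜ ⊆ S := by
  rw [hℓ.dep_iff _ inter_subset_left, image_inter_preimage, hℓ.bijOn.image_eq, univ_inter]
  simp only [← Finset.coe_compl, Finset.coe_subset]

-- The lines of the Fano plane are permuted cyclically by translations.
lemma sub_const (hℓ : IsFanoDualLabelling N ℓ) (k : Fin 7) :
    IsFanoDualLabelling N (fun x => ℓ x - k) := by
  have hbij := (Equiv.subRight k).bijective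
  refine ⟨(bijOn_univ.2 hbij).comp hℓ.bijOn, fun X hX => ?_⟩
  have line_sub (i : Fin 7) :
      ((fanoLine (i - k))ᶜ : Set (Fin 7)) = Equiv.subRight k '' (fanoLine i)ᶜ := by
    rw [image_compl_eq hbij, ← Finset.coe_image, compl_inj_iff, Finset.coe_inj]
    decide +revert
  have image_sub : (fun x => ℓ x - k) '' X = Equiv.subRight k '' (ℓ '' X) :=
    (image_image (Equiv.subRight k) ℓ X).symm
  rw [hℓ.dep_iff X hX, image_sub, iff_comm, hbij.surjective.exists]
  refine exists_congr fun i => ?_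
  rw [Equiv.subRight_apply, line_sub, image_subset_image_iff hbij.injective]

lemma exists_eq_zero (hℓ : IsFanoDualLabelling N ℓ) (e : α) :
    ∃ ℓ', IsFanoDualLabelling N ℓ' ∧ ℓ' e = 0 :=
  ⟨_, hℓ.sub_const (ℓ e), sub_self _⟩

end IsFanoDualLabelling

/-! ### Proper minors of the dual Fano matroid -/

lemma isGraphic_of_dep_iff {α V : Type u} {ι : Type*} [DecidableEq V] {M : Matroid α} {ℓ : α → ι}
    (hℓ : InjOn ℓ M.E) (t : ι → Sym2 V) (hdep : ∀ X ⊆ M.E, M.Dep X ↔ ∃ T : Finset ι,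
      (T.Nonempty ∧ ∀ v, Even (∑ i ∈ T, (t i).toMultiset.count v)) ∧ (T : Set ι) ⊆ ℓ '' X) :
    IsGraphic M := by
  classical
  let G : Graph V α := ⟨M.E, t ∘ ℓ⟩
  refine ⟨V, G, isGraphicRep_iff.2 ⟨rfl, fun I hI => ?_⟩⟩
  have sum_eq_zero_iff {S : Finset α} (hS : (S : Set α) ⊆ I) : ∑ e ∈ S, G.incVec e = 0 ↔
      ∀ v, Even (∑ i ∈ S.image ℓ, (t i).toMultiset.count v) := by
    simp only [Graph.sum_incVec_eq_zero_iff, Graph.deg_coe,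
      Finset.sum_image (hℓ.mono (hS.trans hI)), G, Function.comp_apply]
  rw [← not_dep_iff, hdep I hI, linearIndepOn_zmod_two_iff]
  push Not
  constructor
  · intro h S hS hsum
    by_contra! hne
    refine h (S.image ℓ) ⟨hne.image ℓ, (sum_eq_zero_iff hS).1 hsum⟩ ?_
    rw [Finset.coe_image]
    exact image_mono hS
  · rintro h T ⟨hT, heven⟩ hTI
    obtain ⟨S, hS, rfl⟩ := Finset.subset_set_image_iff.1 hTI
    exact hT.ne_empty (by rw [h S hS ((sum_eq_zero_iff hS).2 heven), Finset.image_empty])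

/-- The ends of the edges `1, …, 6` of a theta graph with three paths of length two, in which the
cycles are the complements of the lines of the Fano plane through `0`. The value at `0` is a dummy
loop. -/
def thetaEnds : Fin 7 → Sym2 (ULift.{u} (Fin 5)) := Sym2.map ULift.up ∘
  ![s(0, 0), s(0, 4), s(0, 2), s(4, 1), s(0, 3), s(3, 1), s(2, 1)]

/-- The ends of the edges `1, …, 6` of a complete graph on four vertices, in which the even edge
sets are the complements of the lines of the Fano plane with the point `0` removed. The value at `0`
is a dummy loop. -/
def completeEnds : Fin 7 → Sym2 (ULift.{u} (Fin 4)) := Sym2.map ULift.up ∘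
  ![s(0, 0), s(0, 3), s(0, 1), s(1, 2), s(0, 2), s(1, 3), s(2, 3)]

lemma even_thetaEnds_iff : ∀ T : Finset (Fin 7), 0 ∉ T →
    ((T.Nonempty ∧ ∀ v, Even (∑ i ∈ T, (thetaEnds.{u} i).toMultiset.count v)) ↔
      ∃ i, (fanoLine i)ᶜ = T) := by
  decide +kernel

lemma even_completeEnds_iff : ∀ T : Finset (Fin 7), 0 ∉ T →
    ((T.Nonempty ∧ ∀ v, Even (∑ i ∈ T, (completeEnds.{u} i).toMultiset.count v)) ↔
      ∃ i, (fanoLine i)ᶜ.erase 0 = T) := by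
  decide +kernel

namespace IsFanoDualLabelling

variable {α : Type u} {N : Matroid α} {ℓ : α → Fin 7} {e : α}

lemma notMem_image (hℓ : IsFanoDualLabelling N ℓ) (he : e ∈ N.E) (h0 : ℓ e = 0) {X : Set α}
    (hX : X ⊆ N.E \ {e}) : 0 ∉ ℓ '' X := by
  rw [← h0, hℓ.bijOn.injOn.mem_image_iff (hX.trans sdiff_subset) he]
  exact fun heX => (hX heX).2 rfl

lemma isGraphic_delete (hℓ : IsFanoDualLabelling N ℓ) (he : e ∈ N.E) (h0 : ℓ e = 0) :
    IsGraphic (N ＼ {e}) := by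
  refine isGraphic_of_dep_iff (hℓ.bijOn.injOn.mono sdiff_subset) thetaEnds fun X hX => ?_
  rw [delete_ground] at hX
  have h0X := hℓ.notMem_image he h0 hX
  rw [delete_dep_iff, and_iff_left (subset_sdiff.1 hX).2, hℓ.dep_iff X (hX.trans sdiff_subset)]
  constructor
  · rintro ⟨i, hi⟩
    rw [← Finset.coe_compl] at hi
    exact ⟨_, (even_thetaEnds_iff _ fun h => h0X (hi h)).2 ⟨i, rfl⟩, hi⟩
  · rintro ⟨T, hT, hTX⟩
    obtain ⟨i, rfl⟩ := (even_thetaEnds_iff T fun h => h0X (hTX h)).1 hT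
    exact ⟨i, by rwa [← Finset.coe_compl]⟩

lemma indep_singleton (hℓ : IsFanoDualLabelling N ℓ) (he : e ∈ N.E) : N.Indep {e} := by
  have not_subset_singleton : ∀ i j, ¬ (fanoLine i)ᶜ ⊆ {j} := by decide
  rw [← not_dep_iff (singleton_subset_iff.2 he), hℓ.dep_iff _ (singleton_subset_iff.2 he)]
  rintro ⟨i, hi⟩
  rw [image_singleton, ← Finset.coe_compl, ← Finset.coe_singleton, Finset.coe_subset] at hi
  exact not_subset_singleton i _ hi

lemma isGraphic_contract (hℓ : IsFanoDualLabelling N ℓ) (he : e ∈ N.E) (h0 : ℓ e = 0) :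
    IsGraphic (N ／ {e}) := by
  refine isGraphic_of_dep_iff (hℓ.bijOn.injOn.mono sdiff_subset) completeEnds fun X hX => ?_
  rw [contract_ground] at hX
  have h0X := hℓ.notMem_image he h0 hX
  have subset_insert_iff (i : Fin 7) : ((fanoLine i)ᶜ : Set (Fin 7)) ⊆ ℓ '' (X ∪ {e}) ↔
      (((fanoLine i)ᶜ.erase 0 : Finset (Fin 7)) : Set (Fin 7)) ⊆ ℓ '' X := by
    rw [image_union, image_singleton, h0, Finset.coe_erase, Finset.coe_compl, union_singleton,
      sdiff_singleton_subset_iff]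
  rw [(hℓ.indep_singleton he).contract_dep_iff, and_iff_right (subset_sdiff.1 hX).2,
    hℓ.dep_iff _ (union_subset (hX.trans sdiff_subset) (singleton_subset_iff.2 he))]
  simp only [subset_insert_iff]
  constructor
  · rintro ⟨i, hi⟩
    exact ⟨_, (even_completeEnds_iff _ (Finset.notMem_erase 0 _)).2 ⟨i, rfl⟩, hi⟩
  · rintro ⟨T, hT, hTX⟩
    obtain ⟨i, rfl⟩ := (even_completeEnds_iff T fun h => h0X (hTX h)).1 hT
    exact ⟨i, hTX⟩

end IsFanoDualLabelling

lemma IsFano.isGraphic_of_isStrictMinor_dual {α : Type u} {F N : Matroid α} (hF : IsFano F)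
    (hN : IsStrictMinor N F✶) : IsGraphic N := by
  obtain ⟨ℓ, hℓ⟩ := hF.exists_isFanoDualLabelling
  refine isGraphic_of_isStrictMinor (fun e he => ?_) (fun e he => ?_) hN
  · obtain ⟨ℓ', hℓ', h0⟩ := hℓ.exists_eq_zero e
    exact hℓ'.isGraphic_delete he h0
  · obtain ⟨ℓ', hℓ', h0⟩ := hℓ.exists_eq_zero e
    exact hℓ'.isGraphic_contract he h0

/-! ### Bicircular lift matroids -/

namespace IsLiftRep

variable {V α : Type u} {G : Graph V α} {N : Matroid α} {X Y : Set α}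

lemma dep_iff (hG : IsLiftRep G N) : N.Dep X ↔ X ⊆ N.E ∧ G.HasTwoCycles X := by
  constructor
  · intro hX
    obtain ⟨C, hCX, hC⟩ := hX.exists_isCircuit_subset
    obtain ⟨C₁, C₂, h₁, h₂, hne, h₁C, h₂C⟩ := ((hG.2 C).1 hC).prop.2
    exact ⟨hX.subset_ground, C₁, C₂, h₁, h₂, hne, h₁C.trans hCX, h₂C.trans hCX⟩
  · rintro ⟨hXE, C₁, C₂, h₁, h₂, hne, h₁X, h₂X⟩
    obtain ⟨C, hC, hlift⟩ := exists_subset_minimal (h₁.finite.union h₂.finite)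
      (P := fun Y => Y ⊆ G.E ∧ G.HasTwoCycles Y)
      ⟨union_subset h₁.1 h₂.1, C₁, C₂, h₁, h₂, hne, subset_union_left, subset_union_right⟩
    exact ((hG.2 C).2 hlift).prop.superset (hC.trans (union_subset h₁X h₂X)) hXE

lemma exists_isCycle_subset_inter (hG : IsLiftRep G N) (hXY : N.Indep (X ∪ Y))
    (hX : ∃ C ⊆ X, G.IsCycle C) (hY : ∃ C ⊆ Y, G.IsCycle C) : ∃ C ⊆ X ∩ Y, G.IsCycle C := by
  obtain ⟨C, hCX, hC⟩ := hX
  obtain ⟨D, hDY, hD⟩ := hY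
  obtain rfl : C = D := by
    by_contra hne
    exact hXY.not_dep (hG.dep_iff.2 ⟨hXY.subset_ground, C, D, hC, hD, hne,
      hCX.trans subset_union_left, hDY.trans subset_union_right⟩)
  exact ⟨C, subset_inter hCX hDY, hC⟩

end IsLiftRep

namespace IsFanoDualLabelling

variable {V α : Type u} {N : Matroid α} {ℓ : α → Fin 7} {G : Graph V α} {R S T : Finset (Fin 7)}

lemma exists_isCycle_of_erase_subset (hℓ : IsFanoDualLabelling N ℓ) (hG : IsLiftRep G N)
    (i j : Fin 7) (hS : (fanoLine i)ᶜ.erase j ⊆ S) : ∃ C ⊆ N.E ∩ ℓ ⁻¹' S, G.IsCycle C := by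
  obtain ⟨e, he, rfl⟩ := hℓ.bijOn.surjOn (mem_univ j)
  have hdep := (hℓ.dep_preimage_iff (fanoLine i)ᶜ).2 ⟨i, Subset.rfl⟩
  obtain ⟨C, hC, hcycle⟩ := (hG.dep_iff.1 hdep).2.exists_isCycle_subset_sdiff_singleton e
  refine ⟨C, fun x hx => ?_, hcycle⟩
  obtain ⟨⟨hxE, hxi⟩, hxe⟩ := hC hx
  exact ⟨hxE, hS (Finset.mem_erase.2 ⟨hℓ.bijOn.injOn.ne hxE he hxe, hxi⟩)⟩

lemma exists_isCycle_of_inter_subset (hℓ : IsFanoDualLabelling N ℓ) (hG : IsLiftRep G N)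
    (hR : S ∩ T ⊆ R) (hST : ∀ i, ¬ (fanoLine i)ᶜ ⊆ S ∪ T)
    (hS : ∃ C ⊆ N.E ∩ ℓ ⁻¹' S, G.IsCycle C) (hT : ∃ C ⊆ N.E ∩ ℓ ⁻¹' T, G.IsCycle C) :
    ∃ C ⊆ N.E ∩ ℓ ⁻¹' R, G.IsCycle C := by
  have hindep : N.Indep (N.E ∩ ℓ ⁻¹' (S ∪ T : Finset (Fin 7))) := by
    rw [← not_dep_iff, hℓ.dep_preimage_iff, not_exists]
    exact hST
  rw [Finset.coe_union, preimage_union, inter_union_distrib_left] at hindep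
  obtain ⟨C, hC, hcycle⟩ := hG.exists_isCycle_subset_inter hindep hS hT
  exact ⟨C, fun x hx => ⟨(hC hx).1.1, hR (Finset.mem_inter.2 ⟨(hC hx).1.2, (hC hx).2.2⟩)⟩, hcycle⟩

lemma not_isLiftRep (hℓ : IsFanoDualLabelling N ℓ) : ¬ IsLiftRep G N := by
  intro hG
  have cycle₂₅₆ := hℓ.exists_isCycle_of_erase_subset hG 0 4 (S := {2, 5, 6}) (by decide)
  have cycle₃₅₆ := hℓ.exists_isCycle_of_erase_subset hG 1 0 (S := {3, 5, 6}) (by decide)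
  have cycle₀₁₄ := hℓ.exists_isCycle_of_erase_subset hG 2 6 (S := {0, 1, 4}) (by decide)
  have cycle₀₁₂ := hℓ.exists_isCycle_of_erase_subset hG 3 5 (S := {0, 1, 2}) (by decide)
  have cycle₅₆ := hℓ.exists_isCycle_of_inter_subset hG (R := {5, 6}) (by decide) (by decide)
    cycle₂₅₆ cycle₃₅₆
  have cycle₀₁ := hℓ.exists_isCycle_of_inter_subset hG (R := {0, 1}) (by decide) (by decide)
    cycle₀₁₄ cycle₀₁₂
  obtain ⟨C, hC, hcycle⟩ := hℓ.exists_isCycle_of_inter_subset hG (R := ∅) (by decide) (by decide)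
    cycle₅₆ cycle₀₁
  obtain ⟨e, he⟩ := hcycle.nonempty
  exact Finset.notMem_empty (ℓ e) (hC he).2

end IsFanoDualLabelling

lemma IsFano.not_isBicircularLift_dual {α : Type u} {F : Matroid α} (hF : IsFano F) :
    ¬ IsBicircularLift F✶ := by
  rintro ⟨V, G, hG⟩
  obtain ⟨ℓ, hℓ⟩ := hF.exists_isFanoDualLabelling
  exact hℓ.not_isLiftRep hG

theorem statement_5 {α : Type u} (N : Matroid α) (h : IsFano N✶) :
    ExcludedMinorBL N ∧ ¬ IsBicircularLift N := by
  obtain ⟨F, hF, rfl⟩ : ∃ F, IsFano F ∧ N = F✶ := ⟨N✶, h, N.dual_dual.symm⟩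
  have not_lift := hF.not_isBicircularLift_dual
  exact ⟨⟨not_or_intro hF.not_isGraphic_dual not_lift,
    fun M hM => .inl (hF.isGraphic_of_isStrictMinor_dual hM)⟩, not_lift⟩

end BLFormal
end

section
/- Let M be an excluded minor of \overline{BL}. Then either M is a connected matroid, or M is isomorphic to the direct sum U_{2,4} \oplus U_{0,1} of the uniform matroid U_{2,4} and a loop. -/
/-!
Call a finite edge set even if all its degrees are even. Cycles are the minimal nonempty even sets,
and the even subsets of `C` form a vector space over `GF(2)`; hence `C` is dependent in the cycle
matroid iff it has more than one even subset, and in the bicircular lift matroid iff it has more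
than two. Deleting an element of some even subset of `C` halves the number of even subsets of `C`.

An excluded minor `M` is finite: an infinite circuit would survive the contraction of an element,
and if all finite restrictions of a finitary matroid are graphic (or all are bicircular lift), then
so is the matroid, by an ultraproduct of the representing graphs.

Let `(X, Y)` be a 1-separation of `M`. If both sides are graphic, then so is `M`. Otherwise one
side, say `X`, is the bicircular lift matroid of a graph but not graphic. Then `Y` contains a
circuit `C`, since isolated independent elements can be added to the graph of `X` as pendant edges.
If the cycles in `X` were pairwise disjoint, then the dependent sets inside `X` would be those
containing two of them, so that parallel paths along these cycles would represent `M ↾ X`.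
So some two cycles intersect, and `X` contains a theta subgraph `T`, in which two cycles `A`, `B`
intersect. If the cycle space of `X` had only the four elements of that of `T`, then a set would be
dependent iff it contains `A ∪ B`, and `M ↾ X` would be graphic again. Therefore some `X₀ ⊆ X`
contains `T` and has exactly eight even subsets. Choose a set `R ⊆ X₀` of four elements that are
pairwise separated by even sets: elements of `A \ B`, `B \ A` and `A ∩ B`, and one outside `A ∪ B`.
Removing one of them from `X₀` leaves four even sets and removing two leaves two, so contracting
`X₀ \ R` turns `R` into `U_{2,4}`. Contracting all but one element of `C` moreover leaves a loop.
As `U_{2,4} ⊕ U_{0,1}` is neither graphic nor bicircular lift, this minor is `M` itself.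
-/

open Set Matroid

universe u

namespace BLFormal

section EvenSets

open scoped Classical symmDiff

variable {V α : Type*} {inc : α → Sym2 V} {A B C : Finset α} {v : V}

variable (inc) in
/-- The degree of `v` in the edge set `A` of the graph with incidence function `inc`; a loop at `v`
counts twice. -/
noncomputable def degree (A : Finset α) (v : V) : ℕ := ∑ e ∈ A, (inc e).toMultiset.count v

variable (inc) in
/-- The finite set of vertices incident with the edge set `A`. -/
noncomputable def endpoints (A : Finset α) : Finset V := A.biUnion fun e => (inc e).toFinset

variable (inc) in
/-- Even edge sets, the members of the cycle space over `GF(2)`: all degrees are even. -/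
def IsEven (A : Finset α) : Prop := ∀ v, Even (degree inc A v)

lemma count_toMultiset_mk (a b : V) :
    s(a, b).toMultiset.count v = (if v = a then 1 else 0) + if v = b then 1 else 0 := by
  have hcoe : s(a, b).toMultiset = {a, b} := rfl
  rw [hcoe, Multiset.insert_eq_cons, Multiset.count_cons, Multiset.count_singleton, add_comm]

lemma mem_endpoints : v ∈ endpoints inc A ↔ ∃ e ∈ A, v ∈ inc e := by
  simp [endpoints]

lemma degree_ne_zero_iff : degree inc A v ≠ 0 ↔ v ∈ endpoints inc A := by
  simp [degree, mem_endpoints]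

lemma isEven_of_forall_mem_endpoints (h : ∀ v ∈ endpoints inc A, Even (degree inc A v)) :
    IsEven inc A := fun v => by
  by_cases hv : v ∈ endpoints inc A
  · exact h v hv
  · exact not_not.1 (mt degree_ne_zero_iff.1 hv) ▸ Even.zero

lemma IsEven.two_le_degree (hA : IsEven inc A) (hv : v ∈ endpoints inc A) :
    2 ≤ degree inc A v := by
  have := degree_ne_zero_iff.2 hv
  have := hA v
  grind

lemma degree_sdiff_add_degree (h : A ⊆ C) :
    degree inc (C \ A) v + degree inc A v = degree inc C v :=
  Finset.sum_sdiff h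

lemma mem_of_degree_le (hAC : A ⊆ C) (hv : degree inc C v ≤ degree inc A v) {e : α} (he : e ∈ C)
    (hve : v ∈ inc e) : e ∈ A := by
  by_contra heA
  have hpos : degree inc (C \ A) v ≠ 0 :=
    degree_ne_zero_iff.2 (mem_endpoints.2 ⟨e, Finset.mem_sdiff.2 ⟨he, heA⟩, hve⟩)
  have := degree_sdiff_add_degree (inc := inc) (v := v) hAC
  omega

lemma degree_symmDiff_add :
    degree inc (A ∆ B) v + 2 * degree inc (A ∩ B) v = degree inc A v + degree inc B v := by
  have hA := degree_sdiff_add_degree (inc := inc) (v := v) (A.inter_subset_left (s₂ := B))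
  have hB := degree_sdiff_add_degree (inc := inc) (v := v) (A.inter_subset_right (s₂ := B))
  rw [Finset.sdiff_inter_self_left] at hA
  rw [Finset.sdiff_inter_self_right] at hB
  have hAB : degree inc (A ∆ B) v = degree inc (A \ B) v + degree inc (B \ A) v :=
    Finset.sum_union disjoint_sdiff_sdiff
  omega

lemma even_degree_symmDiff :
    Even (degree inc (A ∆ B) v) ↔ (Even (degree inc A v) ↔ Even (degree inc B v)) := by
  have := degree_symmDiff_add (inc := inc) (A := A) (B := B) (v := v)
  grind

lemma isEven_empty : IsEven inc ∅ := fun _ => by simp [degree]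

lemma IsEven.symmDiff (hA : IsEven inc A) (hB : IsEven inc B) : IsEven inc (A ∆ B) := fun v =>
  even_degree_symmDiff.2 (iff_of_true (hA v) (hB v))

lemma sum_degree_endpoints : ∑ v ∈ endpoints inc A, degree inc A v = 2 * A.card := by
  have hcount : ∀ e ∈ A, ∑ v ∈ endpoints inc A, (inc e).toMultiset.count v = 2 := fun e he => by
    rw [← (inc e).card_toMultiset]
    exact Multiset.sum_count_eq_card fun v hv =>
      mem_endpoints.2 ⟨e, he, Sym2.mem_toMultiset.1 hv⟩
  simp only [degree]
  rw [Finset.sum_comm, Finset.sum_congr rfl hcount, Finset.sum_const, smul_eq_mul, mul_comm]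

lemma isEven_of_forall_ne {w : V} (h : ∀ v ≠ w, Even (degree inc A v)) : IsEven inc A := by
  refine isEven_of_forall_mem_endpoints fun v hmem => ?_
  obtain rfl | hv := eq_or_ne v w
  · have hsum : Even (∑ x ∈ endpoints inc A, degree inc A x) :=
      sum_degree_endpoints ▸ even_two_mul _
    rw [← Finset.add_sum_erase _ _ hmem, Nat.even_add] at hsum
    exact hsum.2 (Finset.even_sum _ fun x hx => h x (Finset.ne_of_mem_erase hx))
  · exact h v hv

end EvenSets

section Cycles

open scoped Classical symmDiff

variable {V α : Type u} {inc : α → Sym2 V} {A B C : Finset α} {v : V}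

variable (inc) in
/-- Minimal nonempty even edge sets, the combinatorial form of the cycles of a graph. -/
def IsMinEven (C : Finset α) : Prop := Minimal (fun A => A.Nonempty ∧ IsEven inc A) C

lemma IsMinEven.eq_of_subset (hC : IsMinEven inc C) (hA : IsEven inc A) (hA0 : A.Nonempty)
    (hAC : A ⊆ C) : A = C :=
  hC.eq_of_le ⟨hA0, hA⟩ hAC

lemma IsEven.exists_isMinEven_subset (hA : IsEven inc A) (hA0 : A.Nonempty) :
    ∃ C ⊆ A, IsMinEven inc C := by
  obtain ⟨C, hCA, hC⟩ := exists_minimal_le_of_wellFoundedLT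
    (fun A => A.Nonempty ∧ IsEven inc A) A ⟨hA0, hA⟩
  exact ⟨C, hCA, hC⟩

/-- The symmetric difference of `A` and `B` is even and avoids `e₀`. -/
lemma IsMinEven.eq_of_even_degree_iff (hC : IsMinEven inc C) {e₀ : α} (he₀ : e₀ ∈ C) {w : V}
    (hA : A ⊆ C.erase e₀) (hB : B ⊆ C.erase e₀)
    (h : ∀ v ∈ endpoints inc C, v ≠ w → (Even (degree inc A v) ↔ Even (degree inc B v))) :
    A = B := by
  have hsub : A ∆ B ⊆ C.erase e₀ := symmDiff_le_sup.trans (Finset.union_subset hA hB)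
  have hsubC : A ∆ B ⊆ C := hsub.trans (C.erase_subset e₀)
  have heven : IsEven inc (A ∆ B) := isEven_of_forall_ne (w := w) fun v hv => by
    by_cases hvC : v ∈ endpoints inc C
    · exact even_degree_symmDiff.2 (h v hvC hv)
    · have hv0 := mt (fun hv => Finset.biUnion_subset_biUnion_of_subset_left _ hsubC hv) hvC
      exact not_not.1 (mt degree_ne_zero_iff.1 hv0) ▸ Even.zero
  by_contra hne
  have heq := hC.eq_of_subset heven (Finset.symmDiff_nonempty.2 hne) hsubC
  exact Finset.notMem_erase e₀ C (hsub (heq ▸ he₀))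

/-- For an edge `e₀` and a vertex `w₀` of `C`, the subsets of `C` avoiding `e₀` are told apart by
their odd-degree vertices other than `w₀`. -/
lemma IsMinEven.card_le (hC : IsMinEven inc C) : C.card ≤ (endpoints inc C).card := by
  obtain ⟨e₀, he₀⟩ := hC.prop.1
  obtain ⟨w₀, hw₀⟩ : (endpoints inc C).Nonempty :=
    ⟨_, mem_endpoints.2 ⟨e₀, he₀, Sym2.out_fst_mem _⟩⟩
  let odd (A : Finset α) : Finset V :=
    ((endpoints inc C).erase w₀).filter fun v => Odd (degree inc A v)
  have hinj : Set.InjOn odd ↑(C.erase e₀).powerset := fun A hA B hB hAB =>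
    hC.eq_of_even_degree_iff (w := w₀) he₀ (Finset.mem_powerset.1 hA) (Finset.mem_powerset.1 hB)
      fun v hv hvw => by
        simpa [odd, hv, hvw, ← Nat.not_even_iff_odd, not_iff_not] using Finset.ext_iff.1 hAB v
  have hpow := Finset.card_le_card_of_injOn odd (t := ((endpoints inc C).erase w₀).powerset)
    (fun A _ => Finset.mem_powerset.2 (Finset.filter_subset _ _)) hinj
  rw [Finset.card_powerset, Finset.card_powerset, Nat.pow_le_pow_iff_right one_lt_two,
    Finset.card_erase_of_mem he₀, Finset.card_erase_of_mem hw₀] at hpow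
  have := Finset.card_pos.2 ⟨w₀, hw₀⟩
  omega

lemma IsMinEven.degree_eq_two (hC : IsMinEven inc C) (hv : v ∈ endpoints inc C) :
    degree inc C v = 2 := by
  have htwo : ∀ x ∈ endpoints inc C, 2 ≤ degree inc C x := fun x hx => hC.prop.2.two_le_degree hx
  have hsum : ∑ x ∈ endpoints inc C, 2 = ∑ x ∈ endpoints inc C, degree inc C x := by
    refine (Finset.sum_le_sum htwo).antisymm ?_
    rw [sum_degree_endpoints, Finset.sum_const, smul_eq_mul, mul_comm]
    exact Nat.mul_le_mul_right 2 hC.card_le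
  exact ((Finset.sum_eq_sum_iff_of_le htwo).1 hsum v hv).symm

variable {G : Graph V α}

lemma Graph.mem_vertsOf_coe : v ∈ G.vertsOf ↑C ↔ v ∈ endpoints G.inc C := by
  simp [vertsOf, mem_endpoints]

lemma Graph.deg_coe_s6 : G.deg ↑C v = degree G.inc C v := by
  have hcount : ∀ z : Sym2 V,
      z.toMultiset.count v = (if v ∈ z then 1 else 0) + if z = Sym2.diag v then 1 else 0 := by
    intro z
    induction z with | _ a b =>
    simp only [count_toMultiset_mk, Sym2.mem_iff, Sym2.diag, Sym2.eq_iff]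
    grind
  simp only [degree, hcount, Finset.sum_add_distrib, ← Finset.card_filter, deg]
  rw [← Set.ncard_coe_finset, ← Set.ncard_coe_finset, Finset.coe_filter, Finset.coe_filter]
  rfl

lemma Graph.IsCycle.isMinEven (hC : G.IsCycle ↑C) : IsMinEven G.inc C := by
  obtain ⟨-, -, hne, hdeg, hconn⟩ := hC
  have hdeg : ∀ v ∈ endpoints G.inc C, degree G.inc C v = 2 := fun v hv =>
    deg_coe_s6.symm.trans (hdeg v (mem_vertsOf_coe.2 hv))
  have heven : IsEven G.inc C :=
    isEven_of_forall_mem_endpoints fun v hv => hdeg v hv ▸ even_two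
  refine ⟨⟨hne, heven⟩, fun A ⟨⟨e, he⟩, hA⟩ hAC => ?_⟩
  have hmem : ∀ {v e}, v ∈ endpoints G.inc A → e ∈ C → v ∈ G.inc e → e ∈ A :=
    fun {v e} hv he hve => mem_of_degree_le hAC
      ((hdeg v (mem_endpoints.2 ⟨e, he, hve⟩)).trans_le (hA.two_le_degree hv)) he hve
  have hu : (G.inc e).out.1 ∈ endpoints G.inc A := mem_endpoints.2 ⟨e, he, Sym2.out_fst_mem _⟩
  have hreach : ∀ {v}, Relation.ReflTransGen (G.AdjOn ↑C) (G.inc e).out.1 v →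
      v ∈ endpoints G.inc A := fun {v} h => by
    induction h with
    | refl => exact hu
    | @tail x y _ hxy hx =>
      obtain ⟨f, hf, hfxy⟩ := hxy
      exact mem_endpoints.2
        ⟨f, hmem hx hf (hfxy ▸ Sym2.mem_mk_left x y), hfxy ▸ Sym2.mem_mk_right x y⟩
  intro f hf
  have hv := Sym2.out_fst_mem (G.inc f)
  exact hmem (hreach (hconn _ ⟨e, hAC he, Sym2.out_fst_mem _⟩ _ ⟨f, hf, hv⟩)) hf hv

lemma IsMinEven.connectedOn (hC : IsMinEven G.inc C) : G.ConnectedOn ↑C := by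
  intro u hu v hv
  let reach := Relation.ReflTransGen (G.AdjOn ↑C) u
  have hstep : ∀ {x y e}, e ∈ C → x ∈ G.inc e → y ∈ G.inc e → reach x → reach y := by
    intro x y e he hx hy hr
    obtain rfl | hxy := eq_or_ne x y
    · exact hr
    · exact hr.tail ⟨e, he, (Sym2.mem_and_mem_iff hxy).1 ⟨hx, hy⟩⟩
  set B := C.filter fun e => ∃ x ∈ G.inc e, reach x
  have hBC : B ⊆ C := Finset.filter_subset _ _
  have hBeven : IsEven G.inc B := isEven_of_forall_mem_endpoints fun x hx => by
    obtain ⟨e, he, hxe⟩ := mem_endpoints.1 hx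
    obtain ⟨heC, y, hye, hy⟩ := Finset.mem_filter.1 he
    have hsdiff : x ∉ endpoints G.inc (C \ B) := fun h => by
      obtain ⟨f, hf, hxf⟩ := mem_endpoints.1 h
      rw [Finset.mem_sdiff] at hf
      exact hf.2 (Finset.mem_filter.2 ⟨hf.1, x, hxf, hstep heC hye hxe hy⟩)
    rw [← degree_ne_zero_iff, not_not] at hsdiff
    have hadd := degree_sdiff_add_degree (inc := G.inc) (v := x) hBC
    rw [hsdiff, zero_add] at hadd
    exact hadd ▸ hC.prop.2 x
  obtain ⟨e, he, hue⟩ := hu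
  have hB : B = C := hC.eq_of_subset hBeven
    ⟨e, Finset.mem_filter.2 ⟨he, u, hue, Relation.ReflTransGen.refl⟩⟩ hBC
  obtain ⟨f, hf, hvf⟩ := hv
  obtain ⟨hfC, x, hxf, hx⟩ := Finset.mem_filter.1 (hB.symm ▸ Finset.mem_coe.1 hf : f ∈ B)
  exact hstep hfC hxf hvf hx

lemma Graph.isCycle_coe_iff : G.IsCycle ↑C ↔ ↑C ⊆ G.E ∧ IsMinEven G.inc C := by
  refine ⟨fun h => ⟨h.1, h.isMinEven⟩, fun ⟨hCE, hC⟩ =>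
    ⟨hCE, C.finite_toSet, Finset.coe_nonempty.2 hC.prop.1, fun v hv => ?_, hC.connectedOn⟩⟩
  rw [deg_coe_s6]
  exact hC.degree_eq_two (mem_vertsOf_coe.1 hv)

end Cycles

section Representations

open scoped Classical symmDiff

variable {V α : Type u} {inc : α → Sym2 V} {A B C : Finset α} {k : ℕ} {N : Matroid α}

variable (inc) in
/-- The even subsets of `C`, that is, the cycle space of the subgraph with edge set `C`. -/
noncomputable def evenSubsets (C : Finset α) : Finset (Finset α) := C.powerset.filter (IsEven inc)

lemma mem_evenSubsets : A ∈ evenSubsets inc C ↔ A ⊆ C ∧ IsEven inc A := by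
  simp [evenSubsets]

lemma empty_mem_evenSubsets : ∅ ∈ evenSubsets inc C :=
  mem_evenSubsets.2 ⟨C.empty_subset, isEven_empty⟩

lemma card_evenSubsets_pos : 0 < (evenSubsets inc C).card :=
  Finset.card_pos.2 ⟨∅, empty_mem_evenSubsets⟩

lemma monotone_card_evenSubsets : Monotone fun C => (evenSubsets inc C).card :=
  fun _ _ h => Finset.card_le_card (Finset.filter_subset_filter _ (Finset.powerset_mono.2 h))

lemma one_lt_card_evenSubsets_iff : 1 < (evenSubsets inc C).card ↔ ∃ A ⊆ C, IsMinEven inc A := by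
  rw [Finset.one_lt_card_iff_nontrivial]
  constructor
  · intro h
    obtain ⟨A, hA, hA0⟩ := h.exists_ne ∅
    obtain ⟨hAC, hA⟩ := mem_evenSubsets.1 hA
    obtain ⟨D, hDA, hD⟩ := hA.exists_isMinEven_subset (Finset.nonempty_iff_ne_empty.2 hA0)
    exact ⟨D, hDA.trans hAC, hD⟩
  · rintro ⟨A, hAC, hA⟩
    exact ⟨A, mem_evenSubsets.2 ⟨hAC, hA.prop.2⟩, ∅, empty_mem_evenSubsets, hA.prop.1.ne_empty⟩

/-- If all minimal even sets inside `A` and `B` coincided with one `D`, then `D` would be disjoint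
from `A ∆ B`, which also contains a minimal even set. -/
lemma two_lt_card_evenSubsets_iff : 2 < (evenSubsets inc C).card ↔
    ∃ A ⊆ C, ∃ B ⊆ C, A ≠ B ∧ IsMinEven inc A ∧ IsMinEven inc B := by
  constructor
  · intro h
    have hcard : 1 < ((evenSubsets inc C).erase ∅).card := by
      rw [Finset.card_erase_of_mem empty_mem_evenSubsets]
      omega
    obtain ⟨A, hA, B, hB, hAB⟩ := Finset.one_lt_card.1 hcard
    simp only [Finset.mem_erase, mem_evenSubsets, ne_eq, ← Finset.nonempty_iff_ne_empty] at hA hB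
    obtain ⟨hA0, hAC, hA⟩ := hA
    obtain ⟨hB0, hBC, hB⟩ := hB
    obtain ⟨D, hDA, hD⟩ := hA.exists_isMinEven_subset hA0
    obtain ⟨D', hDB, hD'⟩ := hB.exists_isMinEven_subset hB0
    obtain ⟨D'', hDAB, hD''⟩ :=
      (hA.symmDiff hB).exists_isMinEven_subset (Finset.symmDiff_nonempty.2 hAB)
    by_contra! hunique
    have hDD' : D = D' := by_contra fun hne =>
      hunique D (hDA.trans hAC) D' (hDB.trans hBC) hne hD hD'
    have hDD'' : D = D'' := by_contra fun hne => hunique D (hDA.trans hAC) D''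
      (hDAB.trans (symmDiff_le_sup.trans (Finset.union_subset hAC hBC))) hne hD hD''
    obtain ⟨x, hx⟩ := hD.prop.1
    have hxAB := Finset.mem_symmDiff.1 (hDAB (hDD'' ▸ hx))
    exact hxAB.elim (fun h => h.2 (hDB (hDD' ▸ hx))) fun h => h.2 (hDA hx)
  · rintro ⟨A, hAC, B, hBC, hAB, hA, hB⟩
    exact Finset.two_lt_card.2 ⟨∅, empty_mem_evenSubsets, A, mem_evenSubsets.2 ⟨hAC, hA.prop.2⟩, B,
      mem_evenSubsets.2 ⟨hBC, hB.prop.2⟩, hA.prop.1.ne_empty.symm, hB.prop.1.ne_empty.symm, hAB⟩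

lemma Graph.isCycle_iff_minimal {G : Graph V α} {C : Set α} : G.IsCycle C ↔
    Minimal (fun Y => Y ⊆ G.E ∧ ∃ F : Finset α, ↑F ⊆ Y ∧ 1 < (evenSubsets G.inc F).card) C := by
  simp only [one_lt_card_evenSubsets_iff]
  constructor
  · intro hC
    obtain ⟨C, rfl⟩ := hC.2.1.exists_finset_coe
    obtain ⟨hCE, hC⟩ := isCycle_coe_iff.1 hC
    refine ⟨⟨hCE, C, subset_rfl, C, subset_rfl, hC⟩, ?_⟩
    rintro Y ⟨-, F, hFY, A, hAF, hA⟩ hYC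
    have hAC : A ⊆ C := hAF.trans (Finset.coe_subset.1 (hFY.trans hYC))
    rw [← hC.eq_of_subset hA.prop.2 hA.prop.1 hAC]
    exact (Finset.coe_subset.2 hAF).trans hFY
  · rintro ⟨⟨hCE, F, hFC, A, hAF, hA⟩, hmin⟩
    have hAC : ↑A ⊆ C := (Finset.coe_subset.2 hAF).trans hFC
    obtain rfl := hAC.antisymm (hmin ⟨hAC.trans hCE, A, subset_rfl, A, subset_rfl, hA⟩ hAC)
    exact isCycle_coe_iff.2 ⟨hCE, hA⟩

lemma Graph.hasTwoCycles_iff {G : Graph V α} {Y : Set α} (hY : Y ⊆ G.E) :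
    G.HasTwoCycles Y ↔ ∃ F : Finset α, ↑F ⊆ Y ∧ 2 < (evenSubsets G.inc F).card := by
  simp only [two_lt_card_evenSubsets_iff]
  constructor
  · rintro ⟨A, B, hA, hB, hne, hAY, hBY⟩
    obtain ⟨A, rfl⟩ := hA.2.1.exists_finset_coe
    obtain ⟨B, rfl⟩ := hB.2.1.exists_finset_coe
    exact ⟨A ∪ B, by simp [hAY, hBY], A, Finset.subset_union_left, B, Finset.subset_union_right,
      fun h => hne (h ▸ rfl), hA.isMinEven, hB.isMinEven⟩
  · rintro ⟨F, hFY, A, hAF, B, hBF, hne, hA, hB⟩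
    have hAY := (Finset.coe_subset.2 hAF).trans hFY
    have hBY := (Finset.coe_subset.2 hBF).trans hFY
    exact ⟨A, B, isCycle_coe_iff.2 ⟨hAY.trans hY, hA⟩, isCycle_coe_iff.2 ⟨hBY.trans hY, hB⟩,
      fun h => hne (Finset.coe_injective h), hAY, hBY⟩

lemma Graph.liftCircuit_iff_minimal {G : Graph V α} {C : Set α} : G.LiftCircuit C ↔
    Minimal (fun Y => Y ⊆ G.E ∧ ∃ F : Finset α, ↑F ⊆ Y ∧ 2 < (evenSubsets G.inc F).card) C := by
  have hiff : (fun Y => Y ⊆ G.E ∧ G.HasTwoCycles Y) = fun Y => Y ⊆ G.E ∧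
      ∃ F : Finset α, ↑F ⊆ Y ∧ 2 < (evenSubsets G.inc F).card :=
    funext fun _ => propext (and_congr_right hasTwoCycles_iff)
  rw [LiftCircuit, hiff]

/-- A matroid is given by finite circuits, namely the minimal sets containing a set with the upward
closed property `Q`, iff it is finitary and `Q` describes its finite dependent sets. -/
lemma forall_circuit_iff_minimal_iff {Q : Finset α → Prop} (hQ : Monotone Q) :
    (∀ C, Circuit N C ↔ Minimal (fun Y => Y ⊆ N.E ∧ ∃ F : Finset α, ↑F ⊆ Y ∧ Q F) C) ↔
      N.Finitary ∧ ∀ C : Finset α, ↑C ⊆ N.E → (N.Dep ↑C ↔ Q C) := by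
  constructor
  · refine fun h => ⟨finitary_iff_forall_isCircuit_finite.2 fun C hC => ?_, fun C hCE => ⟨?_, ?_⟩⟩
    · obtain ⟨⟨hCE, F, hFC, hF⟩, hmin⟩ := (h C).1 hC
      exact F.finite_toSet.subset (hmin ⟨hFC.trans hCE, F, subset_rfl, hF⟩ hFC)
    · intro hdep
      obtain ⟨D, hDC, hD⟩ := hdep.exists_isCircuit_subset
      obtain ⟨⟨-, F, hFD, hF⟩, -⟩ := (h D).1 hD
      exact hQ (Finset.coe_subset.1 (hFD.trans hDC)) hF
    · intro hC
      obtain ⟨D, hDC, hD⟩ := exists_minimal_le_of_wellFoundedLT Q C hC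
      have hDE : ↑D ⊆ N.E := (Finset.coe_subset.2 hDC).trans hCE
      refine ((h D).2 ⟨⟨hDE, D, subset_rfl, hD.prop⟩, ?_⟩).1.superset (Finset.coe_subset.2 hDC) hCE
      rintro Y ⟨-, F, hFY, hF⟩ hYD
      exact (Finset.coe_subset.2 (hD.2 hF (Finset.coe_subset.1 (hFY.trans hYD)))).trans hFY
  · rintro ⟨hfin, h⟩ C
    have hdep : N.Dep = fun Y => Y ⊆ N.E ∧ ∃ F : Finset α, ↑F ⊆ Y ∧ Q F := by
      funext Y
      refine propext ⟨fun hY => ⟨hY.subset_ground, ?_⟩, ?_⟩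
      · obtain ⟨D, hDY, hD⟩ := hY.exists_isCircuit_subset
        obtain ⟨D, rfl⟩ := (finitary_iff_forall_isCircuit_finite.1 hfin D hD).exists_finset_coe
        exact ⟨D, hDY, (h D hD.subset_ground).1 hD.dep⟩
      · rintro ⟨hYE, F, hFY, hF⟩
        exact ((h F (hFY.trans hYE)).2 hF).superset hFY hYE
    rw [Circuit, hdep]

/-- The graph with incidence function `inc` describes the finite dependent sets of `N`: they are
those containing at least `k` nonempty even sets. For `k = 1` this is the cycle matroid and for
`k = 2` the bicircular lift matroid; the count includes the empty set, whence `k < _`. -/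
def Represents (k : ℕ) (inc : α → Sym2 V) (N : Matroid α) : Prop :=
  ∀ C : Finset α, ↑C ⊆ N.E → (N.Dep ↑C ↔ k < (evenSubsets inc C).card)

/-- Common form of the classes of graphic (`k = 1`) and bicircular lift (`k = 2`) matroids. -/
def IsRepresentable (k : ℕ) (N : Matroid α) : Prop :=
  N.Finitary ∧ ∃ (V : Type u) (inc : α → Sym2 V), Represents k inc N

lemma isRepresentable_iff : IsRepresentable k N ↔ ∃ (V : Type u) (inc : α → Sym2 V), ∀ C,
    Circuit N C ↔
      Minimal (fun Y => Y ⊆ N.E ∧ ∃ F : Finset α, ↑F ⊆ Y ∧ k < (evenSubsets inc F).card) C := by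
  have hmono : ∀ (V : Type u) (inc : α → Sym2 V), Monotone fun C => k < (evenSubsets inc C).card :=
    fun _ _ _ _ hAB (h : k < _) => h.trans_le (monotone_card_evenSubsets hAB)
  simp only [forall_circuit_iff_minimal_iff (hmono _ _), exists_and_left, IsRepresentable,
    Represents]

lemma isGraphic_iff : IsGraphic N ↔ IsRepresentable 1 N := by
  rw [isRepresentable_iff]
  constructor
  · rintro ⟨V, G, hE, hG⟩
    exact ⟨V, G.inc, fun C => by rw [hG, G.isCycle_iff_minimal, hE]⟩
  · rintro ⟨V, inc, hinc⟩
    exact ⟨V, ⟨N.E, inc⟩, rfl, fun C => by rw [hinc, Graph.isCycle_iff_minimal]⟩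

lemma isBicircularLift_iff : IsBicircularLift N ↔ IsRepresentable 2 N := by
  rw [isRepresentable_iff]
  constructor
  · rintro ⟨V, G, hE, hG⟩
    exact ⟨V, G.inc, fun C => by rw [hG, G.liftCircuit_iff_minimal, hE]⟩
  · rintro ⟨V, inc, hinc⟩
    exact ⟨V, ⟨N.E, inc⟩, rfl, fun C => by rw [hinc, Graph.liftCircuit_iff_minimal]⟩

lemma inBL_iff : InBL N ↔ IsRepresentable 1 N ∨ IsRepresentable 2 N := by
  rw [InBL, isGraphic_iff, isBicircularLift_iff]

end Representations

section Halving

open scoped Classical symmDiff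

variable {V α : Type u} {inc : α → Sym2 V} {C W : Finset α} {r : α}

lemma evenSubsets_erase : evenSubsets inc (C.erase r) = (evenSubsets inc C).filter (r ∉ ·) := by
  ext A
  simp only [mem_evenSubsets, Finset.mem_filter, Finset.subset_erase]
  tauto

/-- `A ↦ A ∆ W` exchanges the even subsets that contain `r` with those that do not. -/
lemma IsEven.card_evenSubsets_eq_two_mul (hW : IsEven inc W) (hWC : W ⊆ C) (hr : r ∈ W) :
    (evenSubsets inc C).card = 2 * (evenSubsets inc (C.erase r)).card := by
  have hswap : ((evenSubsets inc C).filter (r ∈ ·)).card =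
      ((evenSubsets inc C).filter (r ∉ ·)).card := by
    have hmem : ∀ A ∈ evenSubsets inc C, A ∆ W ∈ evenSubsets inc C := fun A hA => by
      obtain ⟨hAC, hA⟩ := mem_evenSubsets.1 hA
      exact mem_evenSubsets.2
        ⟨symmDiff_le_sup.trans (Finset.union_subset hAC hWC), hA.symmDiff hW⟩
    refine Finset.card_nbij' (· ∆ W) (· ∆ W) ?_ ?_ ?_ ?_ <;> intro A hA <;>
      simp_all [Finset.mem_symmDiff]
  rw [evenSubsets_erase, ← Finset.card_filter_add_card_filter_not (r ∈ ·), hswap, two_mul]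

lemma card_evenSubsets_le_two_mul :
    (evenSubsets inc C).card ≤ 2 * (evenSubsets inc (C.erase r)).card := by
  by_cases h : ∃ W ∈ evenSubsets inc C, r ∈ W
  · obtain ⟨W, hW, hr⟩ := h
    obtain ⟨hWC, hW⟩ := mem_evenSubsets.1 hW
    exact (hW.card_evenSubsets_eq_two_mul hWC hr).le
  · push Not at h
    rw [evenSubsets_erase, Finset.filter_true_of_mem h]
    omega

end Halving

section Compactness

open scoped Classical

variable {V α : Type u} {k : ℕ} {M : Matroid α} {R : Set α}

section Ultraproduct

variable {ι : Type u} {𝓤 : Ultrafilter ι} {W : ι → Type u} {inc : ∀ i, α → Sym2 (W i)}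

variable (𝓤) in
/-- The vertex of the ultraproduct along `𝓤` given by a choice `v` of one vertex in each graph. -/
def ultraVertex (v : ∀ i, W i) : Filter.Product (𝓤 : Filter ι) W := Quotient.mk _ v

variable (𝓤 inc) in
/-- The incidence function of the ultraproduct along `𝓤` of graphs with the same edges. -/
noncomputable def ultraInc (e : α) : Sym2 (Filter.Product (𝓤 : Filter ι) W) :=
  s(ultraVertex 𝓤 fun i => (inc i e).out.1, ultraVertex 𝓤 fun i => (inc i e).out.2)

lemma eventually_eq_iff (v w : ∀ i, W i) :
    ∀ᶠ i in 𝓤, (v i = w i ↔ ultraVertex 𝓤 v = ultraVertex 𝓤 w) := by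
  have hquot : ultraVertex 𝓤 v = ultraVertex 𝓤 w ↔ ∀ᶠ i in 𝓤, v i = w i := Quotient.eq
  by_cases h : ∀ᶠ i in 𝓤, v i = w i
  · filter_upwards [h] with i hi using iff_of_true hi (hquot.2 h)
  · filter_upwards [Ultrafilter.eventually_not.2 h] with i hi using iff_of_false hi (mt hquot.1 h)

lemma eventually_degree_eq (A : Finset α) (v : ∀ i, W i) :
    ∀ᶠ i in 𝓤, degree (inc i) A (v i) = degree (ultraInc 𝓤 inc) A (ultraVertex 𝓤 v) := by
  have hcount : ∀ e ∈ A, ∀ᶠ i in 𝓤, (inc i e).toMultiset.count (v i) =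
      (ultraInc 𝓤 inc e).toMultiset.count (ultraVertex 𝓤 v) := fun e _ => by
    filter_upwards [eventually_eq_iff v fun i => (inc i e).out.1,
      eventually_eq_iff v fun i => (inc i e).out.2] with i h₁ h₂
    have hout : inc i e = s((inc i e).out.1, (inc i e).out.2) := (Quot.out_eq _).symm
    rw [hout, ultraInc, count_toMultiset_mk, count_toMultiset_mk]
    simp only [h₁, h₂]
  filter_upwards [(Filter.eventually_all_finset A).2 hcount] with i hi
  exact Finset.sum_congr rfl hi

lemma eventually_isEven_iff (A : Finset α) :
    ∀ᶠ i in 𝓤, (IsEven (inc i) A ↔ IsEven (ultraInc 𝓤 inc) A) := by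
  by_cases hA : IsEven (ultraInc 𝓤 inc) A
  · have hends : ∀ e ∈ A, ∀ᶠ i in 𝓤, ∀ v ∈ inc i e, Even (degree (inc i) A v) := fun e _ => by
      filter_upwards [eventually_degree_eq A fun i => (inc i e).out.1,
        eventually_degree_eq A fun i => (inc i e).out.2] with i h₁ h₂ v hv
      have hout : inc i e = s((inc i e).out.1, (inc i e).out.2) := (Quot.out_eq _).symm
      rw [hout, Sym2.mem_iff] at hv
      obtain rfl | rfl := hv
      · exact h₁ ▸ hA _
      · exact h₂ ▸ hA _
    filter_upwards [(Filter.eventually_all_finset A).2 hends] with i hi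
    refine iff_of_true (isEven_of_forall_mem_endpoints fun v hv => ?_) hA
    obtain ⟨e, he, hve⟩ := mem_endpoints.1 hv
    exact hi e he v hve
  · obtain ⟨⟨v⟩, hv⟩ := not_forall.1 hA
    filter_upwards [eventually_degree_eq A v] with i hi
    exact iff_of_false (fun h => hv (hi ▸ h (v i))) hA

lemma eventually_evenSubsets_eq (C : Finset α) :
    ∀ᶠ i in 𝓤, evenSubsets (inc i) C = evenSubsets (ultraInc 𝓤 inc) C := by
  filter_upwards [(Filter.eventually_all_finset C.powerset).2 fun A _ => eventually_isEven_iff A]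
    with i hi using Finset.filter_congr hi

end Ultraproduct

lemma dep_restrict_iff {C : Set α} (hCR : C ⊆ R) (hR : R ⊆ M.E) : (M ↾ R).Dep C ↔ M.Dep C := by
  rw [restrict_dep_iff, and_iff_left hCR, Dep, and_iff_left (hCR.trans hR)]

lemma Represents.restrict {inc : α → Sym2 V} (h : Represents k inc M) (hR : R ⊆ M.E) :
    Represents k inc (M ↾ R) := fun C hC => by
  have hCR : ↑C ⊆ R := hC
  rw [← h C (hCR.trans hR), dep_restrict_iff hCR hR]

lemma IsRepresentable.restrict (h : IsRepresentable k M) (hR : R ⊆ M.E) :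
    IsRepresentable k (M ↾ R) := by
  obtain ⟨hfin, V, inc, hrep⟩ := h
  exact ⟨inferInstance, V, inc, hrep.restrict hR⟩

lemma isRepresentable_of_forall_finite_restrict [M.Finitary]
    (h : ∀ F : Finset α, ↑F ⊆ M.E → IsRepresentable k (M ↾ ↑F)) : IsRepresentable k M := by
  have hF : ∀ F : Finset α, ∃ (V : Type u) (inc : α → Sym2 V),
      Represents k inc (M ↾ ↑(F.filter (· ∈ M.E))) := fun F => (h _ fun _ => by simp).2
  choose W inc hinc using hF
  let 𝓤 : Ultrafilter (Finset α) := Ultrafilter.of Filter.atTop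
  refine ⟨inferInstance, _, ultraInc 𝓤 inc, fun C hCE => ?_⟩
  have hge : ∀ᶠ F in 𝓤, C ⊆ F := Ultrafilter.of_le _ (Filter.eventually_ge_atTop C)
  obtain ⟨F, hF, hCF⟩ := ((eventually_evenSubsets_eq C).and hge).exists
  have hC : (C : Set α) ⊆ F.filter (· ∈ M.E) := fun e he => by simp [hCF he, hCE he]
  rw [← hF, ← hinc F C hC, dep_restrict_iff hC fun e he => (Finset.mem_filter.1 he).2]

end Compactness

section ExcludedMinor

variable {α : Type u} {M : Matroid α} {R C : Set α} {e : α}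

lemma isStrictMinor_restrict (hR : R ⊂ M.E) : IsStrictMinor (M ↾ R) M := by
  refine ⟨⟨∅, M.E \ R, ?_⟩, fun h => hR.ne (congrArg Matroid.E h)⟩
  change M ↾ R = (M ／ ∅) ＼ (M.E \ R)
  rw [contract_empty, delete, sdiff_sdiff_cancel_left hR.subset]

lemma isStrictMinor_contract (he : e ∈ M.E) : IsStrictMinor (M ／ {e}) M := by
  refine ⟨⟨{e}, ∅, ?_⟩, fun h => ?_⟩
  · change M ／ {e} = (M ／ {e}) ＼ ∅
    rw [delete_empty]
  · have hground : M.E \ {e} = M.E := congrArg Matroid.E h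
    exact (hground.symm ▸ he).2 rfl

lemma InBL.finitary (h : InBL M) : M.Finitary :=
  (inBL_iff.1 h).elim And.left And.left

/-- An infinite circuit survives the contraction of one of its elements. -/
lemma ExcludedMinorBL.finitary (hM : ExcludedMinorBL M) : M.Finitary := by
  refine finitary_iff_forall_isCircuit_finite.2 fun C hC => not_not.1 fun hinf => ?_
  obtain ⟨e, he⟩ := hC.nonempty
  have hcircuit : (M ／ {e}).IsCircuit (C \ {e}) :=
    hC.contractElem_isCircuit (Set.Infinite.nontrivial hinf) he
  have hfin := (hM.2 _ (isStrictMinor_contract (hC.subset_ground he))).finitary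
  have hCe := finitary_iff_forall_isCircuit_finite.1 hfin _ hcircuit
  exact hinf (hCe.of_sdiff (finite_singleton e))

lemma ExcludedMinorBL.finite (hM : ExcludedMinorBL M) : M.E.Finite := by
  by_contra hinf
  have := hM.finitary
  have hsub : ∀ F : Finset α, ↑F ⊆ M.E →
      IsRepresentable 1 (M ↾ ↑F) ∨ IsRepresentable 2 (M ↾ ↑F) := fun F hF =>
    inBL_iff.1 (hM.2 _ (isStrictMinor_restrict
      (hF.ssubset_of_ne fun h => hinf (h ▸ F.finite_toSet))))
  refine hM.1 (inBL_iff.2 ?_)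
  by_cases hG : ∀ F : Finset α, ↑F ⊆ M.E → IsRepresentable 1 (M ↾ ↑F)
  · exact Or.inl (isRepresentable_of_forall_finite_restrict hG)
  · push Not at hG
    obtain ⟨F₀, hF₀, hn⟩ := hG
    classical
    refine Or.inr (isRepresentable_of_forall_finite_restrict fun F hF => ?_)
    have hrestrict : ∀ {k : ℕ} {F' : Finset α}, F' ⊆ F₀ ∪ F →
        IsRepresentable k (M ↾ ↑(F₀ ∪ F)) → IsRepresentable k (M ↾ ↑F') := fun {k F'} hF' h => by
      have hF' : (F' : Set α) ⊆ ↑(F₀ ∪ F) := Finset.coe_subset.2 hF'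
      exact restrict_restrict_eq M hF' ▸ h.restrict hF'
    obtain h | h := hsub (F₀ ∪ F) (by simp [hF₀, hF])
    · exact absurd (hrestrict Finset.subset_union_left h) hn
    · exact hrestrict Finset.subset_union_right h

end ExcludedMinor

section OneSeparation

variable {α : Type u} {M : Matroid α} {X Y I J C : Set α}

lemma eRk_eq : eRk M X = M.eRk X :=
  (iSup_le fun I => I.2.1.encard_le_eRk_of_subset I.2.2).antisymm
    (M.eRk_le_iff.2 fun I hIX hI =>
      le_iSup (fun I : {I : Set α // M.Indep I ∧ I ⊆ X} => (I : Set α).encard) ⟨I, hI, hIX⟩)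

lemma IsKSep.symm {k : ℕ} (h : IsKSep M k X Y) : IsKSep M k Y X := by
  obtain ⟨hE, hdisj, hX, hY, hr⟩ := h
  exact ⟨union_comm X Y ▸ hE, hdisj.symm, hY, hX, add_comm (eRk M X) (eRk M Y) ▸ hr⟩

lemma IsKSep.subset_ground {k : ℕ} (h : IsKSep M k X Y) : X ⊆ M.E :=
  h.1 ▸ subset_union_left

lemma IsKSep.indep_union [M.RankFinite] (h : IsKSep M 1 X Y) (hI : M.Indep I) (hIX : I ⊆ X)
    (hJ : M.Indep J) (hJY : J ⊆ Y) : M.Indep (I ∪ J) := by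
  obtain ⟨I', hI', hII'⟩ := hI.subset_isBasis_of_subset hIX h.subset_ground
  obtain ⟨J', hJ', hJJ'⟩ := hJ.subset_isBasis_of_subset hJY h.symm.subset_ground
  have hspan : M.eRk (I' ∪ J') = M.eRank := by
    rw [hI'.eRk_eq_eRk_union, union_comm, hJ'.eRk_eq_eRk_union, union_comm, h.1, eRk_ground]
  have hcard : (I' ∪ J').encard ≤ M.eRk (I' ∪ J') := by
    have hr := h.2.2.2.2
    rw [eRank, eRk_eq, eRk_eq, eRk_eq, eRk_ground, Nat.sub_self, Nat.cast_zero, add_zero] at hr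
    rw [hspan]
    exact (encard_union_le I' J').trans (hI'.encard_eq_eRk ▸ hJ'.encard_eq_eRk ▸ hr)
  exact ((M.isRkFinite_set _).indep_of_encard_le_eRk hcard).subset (union_subset_union hII' hJJ')

lemma IsKSep.dep_iff [M.RankFinite] (h : IsKSep M 1 X Y) (hC : C ⊆ M.E) :
    M.Dep C ↔ M.Dep (C ∩ X) ∨ M.Dep (C ∩ Y) := by
  constructor
  · intro hdep
    by_contra! hn
    have hX := (not_dep_iff (inter_subset_left.trans hC)).1 hn.1
    have hY := (not_dep_iff (inter_subset_left.trans hC)).1 hn.2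
    have hXY := h.indep_union hX inter_subset_right hY inter_subset_right
    rw [← inter_union_distrib_left, h.1, inter_eq_self_of_subset_left hC] at hXY
    exact hdep.not_indep hXY
  · rintro (h | h)
    · exact h.superset inter_subset_left hC
    · exact h.superset inter_subset_left hC

end OneSeparation

section DisjointUnion

open scoped Classical

variable {V W α : Type u} {X Y : Set α} {inc : α → Sym2 V} {inc' : α → Sym2 W} {C : Finset α}
  {M : Matroid α}

/-- The incidence function of the disjoint union of two graphs, one with edges in `X` and the other
with edges outside `X`. -/
noncomputable def glueInc (X : Set α) (inc : α → Sym2 V) (inc' : α → Sym2 W) (e : α) :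
    Sym2 (V ⊕ W) :=
  if e ∈ X then (inc e).map Sum.inl else (inc' e).map Sum.inr

lemma count_toMultiset_map {f : V → W} (hf : f.Injective) (z : Sym2 V) (v : V) :
    (z.map f).toMultiset.count (f v) = z.toMultiset.count v := by
  induction z with | _ a b => simp only [Sym2.map_mk, count_toMultiset_mk, hf.eq_iff]

lemma count_toMultiset_map_of_forall_ne {f : V → W} {w : W} (hw : ∀ v, w ≠ f v) (z : Sym2 V) :
    (z.map f).toMultiset.count w = 0 := by
  induction z with | _ a b => simp only [Sym2.map_mk, count_toMultiset_mk, hw, if_false]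

lemma degree_glueInc_inl (v : V) :
    degree (glueInc X inc inc') C (Sum.inl v) = degree inc (C.filter (· ∈ X)) v := by
  rw [degree, degree, Finset.sum_filter]
  refine Finset.sum_congr rfl fun e _ => ?_
  by_cases he : e ∈ X
  · rw [glueInc, if_pos he, if_pos he, count_toMultiset_map Sum.inl_injective]
  · rw [glueInc, if_neg he, if_neg he, count_toMultiset_map_of_forall_ne fun _ => Sum.inl_ne_inr]

lemma degree_glueInc_inr (w : W) :
    degree (glueInc X inc inc') C (Sum.inr w) = degree inc' (C.filter (· ∉ X)) w := by
  rw [degree, degree, Finset.sum_filter]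
  refine Finset.sum_congr rfl fun e _ => ?_
  by_cases he : e ∈ X
  · rw [glueInc, if_pos he, if_neg (not_not.2 he),
      count_toMultiset_map_of_forall_ne fun _ => Sum.inr_ne_inl]
  · rw [glueInc, if_neg he, if_pos he, count_toMultiset_map Sum.inr_injective]

lemma isEven_glueInc_iff : IsEven (glueInc X inc inc') C ↔
    IsEven inc (C.filter (· ∈ X)) ∧ IsEven inc' (C.filter (· ∉ X)) := by
  simp only [IsEven, Sum.forall, degree_glueInc_inl, degree_glueInc_inr]

lemma card_evenSubsets_glueInc : (evenSubsets (glueInc X inc inc') C).card =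
    (evenSubsets inc (C.filter (· ∈ X))).card * (evenSubsets inc' (C.filter (· ∉ X))).card := by
  have hunion : ∀ A ⊆ C.filter (· ∈ X), ∀ B ⊆ C.filter (· ∉ X),
      (A ∪ B).filter (· ∈ X) = A ∧ (A ∪ B).filter (· ∉ X) = B := by
    intro A hA B hB
    constructor <;> ext e <;> have := @hA e <;> have := @hB e <;> grind
  rw [← Finset.card_product]
  refine Finset.card_nbij' (fun A => (A.filter (· ∈ X), A.filter (· ∉ X)))
    (fun P => P.1 ∪ P.2) ?_ ?_ ?_ ?_
  · intro A hA
    obtain ⟨hAC, hA⟩ := mem_evenSubsets.1 hA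
    obtain ⟨hAX, hAX'⟩ := isEven_glueInc_iff.1 hA
    exact Finset.mem_product.2 ⟨mem_evenSubsets.2 ⟨Finset.filter_subset_filter _ hAC, hAX⟩,
      mem_evenSubsets.2 ⟨Finset.filter_subset_filter _ hAC, hAX'⟩⟩
  · intro P hP
    simp only [Finset.coe_product, Set.mem_prod, Finset.mem_coe, mem_evenSubsets] at hP
    obtain ⟨⟨hA, hAeven⟩, hB, hBeven⟩ := hP
    obtain ⟨hA', hB'⟩ := hunion _ hA _ hB
    exact mem_evenSubsets.2 ⟨Finset.union_subset (hA.trans (C.filter_subset _))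
      (hB.trans (C.filter_subset _)), isEven_glueInc_iff.2 ⟨hA'.symm ▸ hAeven, hB'.symm ▸ hBeven⟩⟩
  · exact fun A _ => Finset.filter_union_filter_not_eq _ A
  · intro P hP
    simp only [Finset.coe_product, Set.mem_prod, Finset.mem_coe, mem_evenSubsets] at hP
    exact Prod.ext_iff.2 (hunion _ hP.1.1 _ hP.2.1)

/-- The incidence function of a star, in which every edge has an end of its own. -/
def starInc (e : α) : Sym2 (Option α) := s(none, some e)

lemma card_evenSubsets_starInc : (evenSubsets starInc C).card = 1 := by
  refine le_antisymm (not_lt.1 fun h => ?_) card_evenSubsets_pos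
  obtain ⟨A, -, hA⟩ := one_lt_card_evenSubsets_iff.1 h
  obtain ⟨e, he⟩ := hA.prop.1
  have hdeg : degree starInc A (some e) = 1 := by
    simp only [degree, starInc, count_toMultiset_mk, reduceCtorEq, if_false, zero_add,
      Option.some_inj, Finset.sum_ite_eq, he, if_true]
  exact absurd (hdeg ▸ hA.prop.2 (some e)) Nat.not_even_one

lemma Represents.dep_iff_card_filter {k : ℕ} (h : Represents k inc (M ↾ X)) (hX : X ⊆ M.E) :
    M.Dep (↑C ∩ X) ↔ k < (evenSubsets inc (C.filter (· ∈ X))).card := by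
  have hcoe : ((C.filter (· ∈ X) : Finset α) : Set α) = ↑C ∩ X := by simp [Set.inter_def]
  rw [← h _ (hcoe ▸ inter_subset_right), hcoe, dep_restrict_iff inter_subset_right hX]

lemma IsKSep.isRepresentable_one [M.RankFinite] (h : IsKSep M 1 X Y)
    (hX : IsRepresentable 1 (M ↾ X)) (hY : IsRepresentable 1 (M ↾ Y)) : IsRepresentable 1 M := by
  obtain ⟨-, V, inc, hinc⟩ := hX
  obtain ⟨-, W, inc', hinc'⟩ := hY
  refine ⟨inferInstance, V ⊕ W, glueInc X inc inc', fun C hC => ?_⟩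
  have hCY : C.filter (· ∉ X) = C.filter (· ∈ Y) := Finset.filter_congr fun e he => by
    have heXY : e ∈ X ∪ Y := h.1.symm ▸ hC he
    exact ⟨heXY.resolve_left, fun heY heX => Set.disjoint_left.1 h.2.1 heX heY⟩
  rw [h.dep_iff hC, hinc.dep_iff_card_filter h.subset_ground,
    hinc'.dep_iff_card_filter h.symm.subset_ground, card_evenSubsets_glueInc, hCY]
  exact (Nat.one_lt_mul_iff.trans (by simp only [card_evenSubsets_pos, true_and])).symm

lemma IsKSep.isRepresentable_two [M.RankFinite] (h : IsKSep M 1 X Y)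
    (hX : IsRepresentable 2 (M ↾ X)) (hY : M.Indep Y) : IsRepresentable 2 M := by
  obtain ⟨-, V, inc, hinc⟩ := hX
  refine ⟨inferInstance, V ⊕ Option α, glueInc X inc starInc, fun C hC => ?_⟩
  rw [h.dep_iff hC, hinc.dep_iff_card_filter h.subset_ground, card_evenSubsets_glueInc,
    card_evenSubsets_starInc, mul_one, or_iff_left (hY.subset inter_subset_right).not_dep]

end DisjointUnion

section ParallelPaths

open scoped Classical symmDiff

variable {α : Type u} {𝒜 : Set (Finset α)} {b : α → Finset α} {A B D : Finset α} {e : α}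

/-- The `j`-th vertex of a path whose edge set is `A`. The vertices `Sum.inl false` and
`Sum.inl true` are the ends of all these paths. -/
def pathVertex (A : Finset α) (j : ℕ) : Bool ⊕ Finset α × ℕ :=
  if j = 0 then Sum.inl false else if j = A.card then Sum.inl true else Sum.inr (A, j)

/-- The incidence function of parallel paths with common ends, `b e` being the edge set of the path
through `e`, traversed in the order of `(b e).toList`. -/
noncomputable def pathInc (b : α → Finset α) (e : α) : Sym2 (Bool ⊕ Finset α × ℕ) :=
  s(pathVertex (b e) ((b e).toList.idxOf e), pathVertex (b e) ((b e).toList.idxOf e + 1))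

lemma inr_eq_pathVertex_iff {i j : ℕ} (hj : j + 1 < A.card) :
    Sum.inr (A, j + 1) = pathVertex B i ↔ A = B ∧ j + 1 = i := by
  unfold pathVertex
  split_ifs <;> grind

lemma eq_and_eq_idxOf_iff (hb : ∀ A ∈ 𝒜, ∀ e ∈ A, b e = A) (hA : A ∈ 𝒜)
    {j : ℕ} (hj : j < A.toList.length) :
    A = b e ∧ j = (b e).toList.idxOf e ↔ A.toList[j] = e := by
  constructor
  · rintro ⟨rfl, rfl⟩
    exact List.getElem_idxOf hj
  · rintro rfl
    rw [hb A hA _ (Finset.mem_toList.1 (List.getElem_mem hj)), A.nodup_toList.idxOf_getElem j hj]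
    exact ⟨rfl, rfl⟩

lemma degree_pathInc_inr (hb : ∀ A ∈ 𝒜, ∀ e ∈ A, b e = A) (hA : A ∈ 𝒜) {j : ℕ}
    (hj : j + 1 < A.toList.length) :
    degree (pathInc b) D (Sum.inr (A, j + 1)) =
      (if A.toList[j + 1] ∈ D then 1 else 0) + if A.toList[j] ∈ D then 1 else 0 := by
  have hj' : j + 1 < A.card := A.length_toList ▸ hj
  calc degree (pathInc b) D (Sum.inr (A, j + 1))
      = ∑ e ∈ D, ((if A.toList[j + 1] = e then 1 else 0) + if A.toList[j] = e then 1 else 0) :=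
        Finset.sum_congr rfl fun e _ => by
          simp only [pathInc, count_toMultiset_mk, inr_eq_pathVertex_iff hj',
            Nat.add_right_cancel_iff, eq_and_eq_idxOf_iff hb hA hj,
            eq_and_eq_idxOf_iff hb hA (Nat.lt_of_succ_lt hj)]
    _ = _ := by rw [Finset.sum_add_distrib, Finset.sum_ite_eq, Finset.sum_ite_eq]

lemma IsEven.subset_of_mem_pathInc (hb : ∀ A ∈ 𝒜, ∀ e ∈ A, b e = A) (hA : A ∈ 𝒜)
    (h : IsEven (pathInc b) D) (heA : e ∈ A) (heD : e ∈ D) : A ⊆ D := by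
  have hstep : ∀ j (hj : j + 1 < A.toList.length),
      (A.toList[j + 1] ∈ D ↔ A.toList[j] ∈ D) := fun j hj => by
    have heven := h (Sum.inr (A, j + 1))
    rw [degree_pathInc_inr hb hA hj] at heven
    grind
  have hzero : ∀ j (hj : j < A.toList.length), (A.toList[j] ∈ D ↔ A.toList[0] ∈ D) := by
    intro j hj
    induction j with
    | zero => rfl
    | succ j ih => exact (hstep j hj).trans (ih (Nat.lt_of_succ_lt hj))
  intro f hf
  obtain ⟨i, hi, rfl⟩ := List.getElem_of_mem (Finset.mem_toList.2 heA)
  obtain ⟨j, hj, rfl⟩ := List.getElem_of_mem (Finset.mem_toList.2 hf)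
  exact (hzero j hj).2 ((hzero i hi).1 heD)

lemma even_sum_range_add_succ_iff (f : ℕ → ℕ) (n : ℕ) :
    Even (∑ j ∈ Finset.range n, (f j + f (j + 1))) ↔ Even (f 0 + f n) := by
  induction n with
  | zero => simp
  | succ n ih => rw [Finset.sum_range_succ, Nat.even_add, ih]; grind

lemma even_degree_pathInc_iff (hb : ∀ e ∈ A, b e = A) (hA : A.Nonempty) (v : Bool ⊕ Finset α × ℕ) :
    Even (degree (pathInc b) A v) ↔ v.isRight := by
  have hdeg : degree (pathInc b) A v = ∑ j ∈ Finset.range A.card,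
      ((if v = pathVertex A j then 1 else 0) + if v = pathVertex A (j + 1) then 1 else 0) := by
    refine Finset.sum_bij (fun e _ => A.toList.idxOf e) ?_ ?_ ?_ ?_
    · exact fun e he => Finset.mem_range.2
        (A.length_toList ▸ List.idxOf_lt_length_of_mem (Finset.mem_toList.2 he))
    · exact fun e he f _ hef => (List.idxOf_inj (Finset.mem_toList.2 he)).1 hef
    · intro j hj
      have hj : j < A.toList.length := A.length_toList.symm ▸ Finset.mem_range.1 hj
      exact ⟨A.toList[j], Finset.mem_toList.1 (List.getElem_mem hj),
        A.nodup_toList.idxOf_getElem j hj⟩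
    · intro e he
      rw [pathInc, count_toMultiset_mk, hb e he]
      congr!
  have hcard : A.card ≠ 0 := hA.card_ne_zero
  rw [hdeg, even_sum_range_add_succ_iff fun j => if v = pathVertex A j then 1 else 0]
  rcases v with (_ | _) | _ <;> simp [pathVertex, hcard]

/-- The graph consists of parallel paths with edge sets the members of `𝒜`, together with the other
elements as pendant edges. -/
lemma exists_one_lt_card_evenSubsets_iff (hdisj : 𝒜.PairwiseDisjoint id)
    (hne : ∀ A ∈ 𝒜, A.Nonempty) : ∃ (V : Type u) (inc : α → Sym2 V), ∀ C : Finset α,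
      1 < (evenSubsets inc C).card ↔ ∃ A ∈ 𝒜, ∃ B ∈ 𝒜, A ≠ B ∧ A ⊆ C ∧ B ⊆ C := by
  have hblock : ∀ e, ∃ B, ∀ A ∈ 𝒜, e ∈ A → B = A := fun e => by
    by_cases h : ∃ B ∈ 𝒜, e ∈ B
    · obtain ⟨B, hB, heB⟩ := h
      exact ⟨B, fun A hA heA => hdisj.elim_finset hB hA e heB heA⟩
    · exact ⟨∅, fun A hA heA => absurd ⟨A, hA, heA⟩ h⟩
  choose b hb using hblock
  have hb : ∀ A ∈ 𝒜, ∀ e ∈ A, b e = A := fun A hA e => hb e A hA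
  let X : Set α := {e | ∃ A ∈ 𝒜, e ∈ A}
  refine ⟨_, glueInc X (pathInc b) starInc, fun C => ?_⟩
  rw [card_evenSubsets_glueInc, card_evenSubsets_starInc, mul_one, one_lt_card_evenSubsets_iff]
  constructor
  · rintro ⟨D, hDC, hD⟩
    have hDX : ∀ e ∈ D, ∃ A ∈ 𝒜, e ∈ A := fun e he => (Finset.mem_filter.1 (hDC he)).2
    have hDC : D ⊆ C := hDC.trans (C.filter_subset _)
    obtain ⟨e, he⟩ := hD.prop.1
    obtain ⟨A, hA, heA⟩ := hDX e he
    have hAD := hD.prop.2.subset_of_mem_pathInc hb hA heA he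
    have hAne : A ≠ D := by
      rintro rfl
      simpa [even_degree_pathInc_iff (hb A hA) (hne A hA)] using hD.prop.2 (Sum.inl true)
    obtain ⟨f, hf, hfA⟩ := Finset.exists_of_ssubset (hAD.ssubset_of_ne hAne)
    obtain ⟨B, hB, hfB⟩ := hDX f hf
    exact ⟨A, hA, B, hB, fun h => hfA (h ▸ hfB), hAD.trans hDC,
      (hD.prop.2.subset_of_mem_pathInc hb hB hfB hf).trans hDC⟩
  · rintro ⟨A, hA, B, hB, hAB, hAC, hBC⟩
    have heven : IsEven (pathInc b) (A ∆ B) := fun v => even_degree_symmDiff.2 <| by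
      rw [even_degree_pathInc_iff (hb A hA) (hne A hA),
        even_degree_pathInc_iff (hb B hB) (hne B hB)]
    obtain ⟨D, hDAB, hD⟩ := heven.exists_isMinEven_subset (Finset.symmDiff_nonempty.2 hAB)
    refine ⟨D, fun e he => ?_, hD⟩
    obtain ⟨h, -⟩ | ⟨h, -⟩ := Finset.mem_symmDiff.1 (hDAB he)
    · exact Finset.mem_filter.2 ⟨hAC h, A, hA, h⟩
    · exact Finset.mem_filter.2 ⟨hBC h, B, hB, h⟩

end ParallelPaths

section IntersectingCycles

open scoped Classical symmDiff

variable {V α : Type u} {inc : α → Sym2 V} {A B C E R T X : Finset α} {r s : α}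

variable (inc E) in
/-- The bicircular lift matroid of the graph with edge set `E` is graphic. -/
def LiftIsGraphicOn : Prop :=
  ∃ (W : Type u) (inc' : α → Sym2 W), ∀ C ⊆ E,
    2 < (evenSubsets inc C).card ↔ 1 < (evenSubsets inc' C).card

/-- If `D` describes the dependent sets of a matroid, then contracting `X \ R` in the restriction
to `X` yields `U_{2,4}` with ground set `R`. -/
structure IsU24Expansion (D : Finset α → Prop) (X R : Finset α) : Prop where
  subset : R ⊆ X
  card_eq : R.card = 4
  erase : ∀ r ∈ R, D (X.erase r)
  not_erase_erase : ∀ r ∈ R, ∀ s ∈ R, r ≠ s → ¬ D ((X.erase r).erase s)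

lemma liftIsGraphicOn_of_pairwiseDisjoint
    (h : {A | A ⊆ E ∧ IsMinEven inc A}.PairwiseDisjoint id) : LiftIsGraphicOn inc E := by
  obtain ⟨W, inc', hinc'⟩ := exists_one_lt_card_evenSubsets_iff h fun A hA => hA.2.prop.1
  refine ⟨W, inc', fun C hCE => ?_⟩
  rw [hinc', two_lt_card_evenSubsets_iff]
  constructor
  · rintro ⟨A, hAC, B, hBC, hAB, hA, hB⟩
    exact ⟨A, ⟨hAC.trans hCE, hA⟩, B, ⟨hBC.trans hCE, hB⟩, hAB, hAC, hBC⟩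
  · rintro ⟨A, ⟨-, hA⟩, B, ⟨-, hB⟩, hAB, hAC, hBC⟩
    exact ⟨A, hAC, B, hBC, hAB, hA, hB⟩

variable (inc) in
/-- `A` and `B` are distinct intersecting cycles. -/
structure AreCrossingCycles (A B : Finset α) : Prop where
  left : IsMinEven inc A
  right : IsMinEven inc B
  ne : A ≠ B
  not_disjoint : ¬ Disjoint A B

lemma IsMinEven.exists_mem_notMem (hA : IsMinEven inc A) (hB : IsMinEven inc B) (h : A ≠ B) :
    ∃ e ∈ A, e ∉ B :=
  Finset.not_subset.1 fun hAB => h (hB.eq_of_subset hA.prop.2 hA.prop.1 hAB)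

/-- If `A ∪ B` is minimal, then it is the edge set of a theta subgraph, whose even subsets are `∅`
and its three cycles. -/
lemma AreCrossingCycles.exists_card_evenSubsets_le_four (h : AreCrossingCycles inc A B)
    (hAE : A ⊆ E) (hBE : B ⊆ E) : ∃ C D, AreCrossingCycles inc C D ∧ C ∪ D ⊆ E ∧
      (evenSubsets inc (C ∪ D)).card ≤ 4 := by
  obtain ⟨T, hTE, hT⟩ := exists_minimal_le_of_wellFoundedLT
    (fun T => ∃ A B, AreCrossingCycles inc A B ∧ A ∪ B ⊆ T) E ⟨A, B, h, Finset.union_subset hAE hBE⟩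
  obtain ⟨A, B, hAB, hABT⟩ := hT.prop
  have hTeq : A ∪ B = T := hT.eq_of_le ⟨A, B, hAB, subset_rfl⟩ hABT
  obtain ⟨x, hxA, hxB⟩ := hAB.left.exists_mem_notMem hAB.right hAB.ne
  have hunique : ∀ D ⊆ (A ∪ B).erase x, IsMinEven inc D → D = B := fun D hD hDmin => by
    obtain ⟨hDAB, hxD⟩ := Finset.subset_erase.1 hD
    by_contra hne
    by_cases hDB : Disjoint D B
    · have hDA := hAB.left.eq_of_subset hDmin.prop.2 hDmin.prop.1
        (Disjoint.left_le_of_le_sup_right hDAB hDB)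
      exact hxD (hDA ▸ hxA)
    · have hxT : x ∈ T := hABT (Finset.mem_union_left B hxA)
      exact hT.not_prop_of_lt (Finset.erase_ssubset hxT) ⟨D, B, ⟨hDmin, hAB.right, hne, hDB⟩,
        hTeq ▸ Finset.union_subset hD (Finset.subset_erase.2 ⟨Finset.subset_union_right, hxB⟩)⟩
  have hle : (evenSubsets inc ((A ∪ B).erase x)).card ≤ 2 := by
    by_contra hlt
    obtain ⟨C, hC, D, hD, hne, hCmin, hDmin⟩ := two_lt_card_evenSubsets_iff.1 (not_le.1 hlt)
    exact hne ((hunique C hC hCmin).trans (hunique D hD hDmin).symm)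
  exact ⟨A, B, hAB, hTeq ▸ hTE, card_evenSubsets_le_two_mul.trans (Nat.mul_le_mul_left 2 hle)⟩

lemma AreCrossingCycles.two_lt_card_evenSubsets_iff (h : AreCrossingCycles inc A B) (hAE : A ⊆ E)
    (hBE : B ⊆ E) (hE : (evenSubsets inc E).card ≤ 4) (hCE : C ⊆ E) :
    2 < (evenSubsets inc C).card ↔ A ⊆ C ∧ B ⊆ C := by
  refine ⟨fun hC => ?_, fun ⟨hAC, hBC⟩ =>
    BLFormal.two_lt_card_evenSubsets_iff.2 ⟨A, hAC, B, hBC, h.ne, h.left, h.right⟩⟩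
  have hsub : ∀ D ⊆ E, IsMinEven inc D → D ⊆ C := fun D hDE hD x hx => by
    by_contra hxC
    have hmono := monotone_card_evenSubsets (inc := inc) (Finset.subset_erase.2 ⟨hCE, hxC⟩)
    have hhalf := hD.prop.2.card_evenSubsets_eq_two_mul hDE hx
    dsimp only at hmono
    omega
  exact ⟨hsub A hAE h.left, hsub B hBE h.right⟩

lemma AreCrossingCycles.liftIsGraphicOn (h : AreCrossingCycles inc A B) (hAE : A ⊆ E)
    (hBE : B ⊆ E) (hE : (evenSubsets inc E).card ≤ 4) : LiftIsGraphicOn inc E := by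
  have hdisj : Disjoint A (B \ A) := Finset.disjoint_sdiff
  obtain ⟨e, heB, heA⟩ := h.right.exists_mem_notMem h.left h.ne.symm
  obtain ⟨W, inc', hinc'⟩ := exists_one_lt_card_evenSubsets_iff (𝒜 := {A, B \ A})
    (Set.pairwise_pair_of_symm.2 fun _ => hdisj) (by
      rintro _ (rfl | rfl)
      · exact h.left.prop.1
      · exact ⟨e, Finset.mem_sdiff.2 ⟨heB, heA⟩⟩)
  refine ⟨W, inc', fun C hCE => ?_⟩
  rw [h.two_lt_card_evenSubsets_iff hAE hBE hE hCE, hinc']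
  have hne : A ≠ B \ A := fun hA => by grind
  have hsub : A ⊆ C ∧ B ⊆ C ↔ A ⊆ C ∧ B \ A ⊆ C := by grind
  rw [hsub]
  simp only [Set.mem_insert_iff, Set.mem_singleton_iff, exists_eq_or_imp, exists_eq_left]
  grind

lemma exists_isEven_of_card_evenSubsets_erase_lt
    (h : (evenSubsets inc (C.erase r)).card < (evenSubsets inc C).card) :
    ∃ W ⊆ C, IsEven inc W ∧ r ∈ W := by
  by_contra! hr
  rw [evenSubsets_erase, Finset.filter_true_of_mem fun W hW =>
    hr W (mem_evenSubsets.1 hW).1 (mem_evenSubsets.1 hW).2] at h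
  exact h.false

lemma exists_four_lt_card_evenSubsets (hTE : T ⊆ E) (hT : (evenSubsets inc T).card ≤ 4)
    (hE : 4 < (evenSubsets inc E).card) :
    ∃ X ⊆ E, T ⊆ X ∧ 4 < (evenSubsets inc X).card ∧
      ∃ r ∈ X, r ∉ T ∧ (evenSubsets inc (X.erase r)).card ≤ 4 := by
  obtain ⟨X, hXE, hX⟩ := exists_minimal_le_of_wellFoundedLT
    (fun X => T ⊆ X ∧ 4 < (evenSubsets inc X).card) E ⟨hTE, hE⟩
  obtain ⟨hTX, hX4⟩ := hX.prop
  obtain ⟨r, hrX, hrT⟩ := Finset.exists_of_ssubset (hTX.ssubset_of_ne fun h => by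
    rw [h] at hT
    omega)
  refine ⟨X, hXE, hTX, hX4, r, hrX, hrT, not_lt.1 fun hlt => ?_⟩
  exact hX.not_prop_of_lt (Finset.erase_ssubset hrX) ⟨Finset.subset_erase.2 ⟨hTX, hrT⟩, hlt⟩

/-- An element of `A \ B`, one of `B \ A`, one of `A ∩ B` and one outside `A ∪ B`. -/
lemma AreCrossingCycles.exists_card_eq_four (h : AreCrossingCycles inc A B) (hrA : r ∉ A)
    (hrB : r ∉ B) : ∃ R : Finset α, R.card = 4 ∧ (∀ s ∈ R, s ∈ A ∨ s ∈ B ∨ s = r) ∧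
      (R : Set α).InjOn fun s => (s ∈ A, s ∈ B) := by
  obtain ⟨r₁, h₁A, h₁B⟩ := h.left.exists_mem_notMem h.right h.ne
  obtain ⟨r₂, h₂B, h₂A⟩ := h.right.exists_mem_notMem h.left h.ne.symm
  obtain ⟨r₃, h₃A, h₃B⟩ := Finset.not_disjoint_iff.1 h.not_disjoint
  refine ⟨{r₁, r₂, r₃, r}, ?_, by simp [*], ?_⟩
  · rw [Finset.card_insert_of_notMem (by grind), Finset.card_insert_of_notMem (by grind),
      Finset.card_pair (by grind)]
  · rw [Finset.coe_insert, Finset.coe_insert, Finset.coe_pair]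
    rintro s (rfl | rfl | rfl | rfl) t (rfl | rfl | rfl | rfl) hst <;> simp_all

lemma card_evenSubsets_erase_erase_le_two (hX : (evenSubsets inc X).card ≤ 8)
    (hr : ∃ W ⊆ X, IsEven inc W ∧ r ∈ W) (hs : ∃ W ⊆ X, IsEven inc W ∧ s ∈ W ∧ r ∉ W) :
    (evenSubsets inc ((X.erase r).erase s)).card ≤ 2 := by
  obtain ⟨W, hWX, hW, hrW⟩ := hr
  obtain ⟨Z, hZX, hZ, hsZ, hrZ⟩ := hs
  have hhalf := hW.card_evenSubsets_eq_two_mul hWX hrW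
  have hquarter := hZ.card_evenSubsets_eq_two_mul (Finset.subset_erase.2 ⟨hZX, hrZ⟩) hsZ
  omega

lemma AreCrossingCycles.exists_isU24Expansion (h : AreCrossingCycles inc A B)
    (hABE : A ∪ B ⊆ E) (hAB : (evenSubsets inc (A ∪ B)).card ≤ 4)
    (hE : 4 < (evenSubsets inc E).card) :
    ∃ X ⊆ E, ∃ R, IsU24Expansion (fun C => 2 < (evenSubsets inc C).card) X R := by
  obtain ⟨X, hXE, hABX, hX, r, hrX, hr, hXr⟩ := exists_four_lt_card_evenSubsets hABE hAB hE
  obtain ⟨hAX, hBX⟩ := Finset.union_subset_iff.1 hABX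
  obtain ⟨hrA, hrB⟩ := Finset.notMem_union.1 hr
  obtain ⟨R, hR, hRmem, hinj⟩ := h.exists_card_eq_four hrA hrB
  have hX8 : (evenSubsets inc X).card ≤ 8 :=
    card_evenSubsets_le_two_mul.trans (Nat.mul_le_mul_left 2 hXr)
  have hcover : ∀ s ∈ R, ∃ W ⊆ X, IsEven inc W ∧ s ∈ W := fun s hs => by
    obtain hsA | hsB | rfl := hRmem s hs
    · exact ⟨A, hAX, h.left.prop.2, hsA⟩
    · exact ⟨B, hBX, h.right.prop.2, hsB⟩
    · exact exists_isEven_of_card_evenSubsets_erase_lt (hXr.trans_lt hX)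
  refine ⟨X, hXE, R, fun s hs => ?_, hR, fun s hs => ?_, fun s hs t ht hst => not_lt.2 ?_⟩
  · obtain ⟨W, hWX, -, hsW⟩ := hcover s hs
    exact hWX hsW
  · obtain ⟨W, hWX, hW, hsW⟩ := hcover s hs
    have hhalf := hW.card_evenSubsets_eq_two_mul hWX hsW
    omega
  · have hsep : ∃ W ⊆ X, IsEven inc W ∧ (t ∈ W ∧ s ∉ W ∨ s ∈ W ∧ t ∉ W) := by
      by_contra! hcon
      have hA := hcon A hAX h.left.prop.2
      have hB := hcon B hBX h.right.prop.2
      exact hst (hinj hs ht (Prod.ext (by grind) (by grind)))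
    obtain ⟨W, hWX, hW, ⟨htW, hsW⟩ | ⟨hsW, htW⟩⟩ := hsep
    · exact card_evenSubsets_erase_erase_le_two hX8 (hcover s hs) ⟨W, hWX, hW, htW, hsW⟩
    · rw [Finset.erase_right_comm]
      exact card_evenSubsets_erase_erase_le_two hX8 (hcover t ht) ⟨W, hWX, hW, hsW, htW⟩

lemma exists_isU24Expansion_of_not_liftIsGraphicOn (hE : ¬ LiftIsGraphicOn inc E) :
    ∃ X ⊆ E, ∃ R, IsU24Expansion (fun C => 2 < (evenSubsets inc C).card) X R := by
  have hcross := mt liftIsGraphicOn_of_pairwiseDisjoint hE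
  simp only [Set.PairwiseDisjoint, Set.Pairwise, not_forall] at hcross
  obtain ⟨A, ⟨hAE, hA⟩, B, ⟨hBE, hB⟩, hne, hdisj⟩ := hcross
  obtain ⟨C, D, hCD, hCDE, hle⟩ :=
    AreCrossingCycles.exists_card_evenSubsets_le_four ⟨hA, hB, hne, hdisj⟩ hAE hBE
  obtain ⟨hCE, hDE⟩ := Finset.union_subset_iff.1 hCDE
  exact hCD.exists_isU24Expansion hCDE hle
    (not_le.1 (mt (hCD.liftIsGraphicOn hCE hDE) hE))

end IntersectingCycles

section U24PlusLoop

open scoped Classical symmDiff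

variable {α : Type u} {M N : Matroid α} {X Y C : Set α} {R S X₀ : Finset α} {l : α}

lemma isU24PlusLoop_of_dep (hl : l ∉ R) (hE : N.E = insert l ↑R) (hR : R.card = 4)
    (hloop : N.Dep {l}) (hdep : ∀ S ⊆ R, (N.Dep ↑S ↔ 3 ≤ S.card)) : IsU24PlusLoop N := by
  refine ⟨R, l, hl, hE, by rw [encard_coe_eq_coe_finsetCard, hR]; rfl, fun C => ⟨fun hC => ?_, ?_⟩⟩
  · by_cases hlC : l ∈ C
    · exact Or.inl (hC.eq_of_le hloop (singleton_subset_iff.2 hlC)).symm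
    · have hCR : C ⊆ R := (subset_insert_iff_of_notMem hlC).1 (hE ▸ hC.prop.subset_ground)
      obtain ⟨C, rfl⟩ := (R.finite_toSet.subset hCR).exists_finset_coe
      obtain ⟨S, hSC, hS⟩ := Finset.exists_subset_card_eq
        ((hdep C (Finset.coe_subset.1 hCR)).1 hC.prop)
      have hSdep : N.Dep ↑S := (hdep S (hSC.trans (Finset.coe_subset.1 hCR))).2 hS.ge
      rw [← hC.eq_of_le hSdep (Finset.coe_subset.2 hSC)] at hCR ⊢
      exact Or.inr ⟨hCR, by rw [encard_coe_eq_coe_finsetCard, hS]; rfl⟩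
  · rintro (rfl | ⟨hCR, hC⟩)
    · exact ⟨hloop, fun J hJ hJl =>
        ((subset_singleton_iff_eq.1 hJl).resolve_left hJ.nonempty.ne_empty).ge⟩
    · obtain ⟨C, rfl⟩ := (R.finite_toSet.subset hCR).exists_finset_coe
      rw [Finset.coe_subset] at hCR
      have hC : C.card = 3 := by exact_mod_cast (encard_coe_eq_coe_finsetCard C).symm.trans hC
      refine ⟨(hdep C hCR).2 hC.ge, fun J hJ hJC => ?_⟩
      obtain ⟨J, rfl⟩ := (C.finite_toSet.subset hJC).exists_finset_coe
      have hJC := Finset.coe_subset.1 hJC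
      have hJ := (hdep J (hJC.trans hCR)).1 hJ
      exact (Finset.eq_of_subset_of_card_le hJC (hC.trans_le hJ)).ge

lemma IsU24PlusLoop.exists_finset_dep_iff (h : IsU24PlusLoop N) :
    ∃ (R : Finset α) (l : α), R.card = 4 ∧ N.Dep {l} ∧ ↑R ⊆ N.E ∧
      ∀ S ⊆ R, (N.Dep ↑S ↔ 3 ≤ S.card) := by
  obtain ⟨X, l, hl, hE, hX, hC⟩ := h
  obtain ⟨R, rfl⟩ := (finite_of_encard_eq_coe (k := 4) hX).exists_finset_coe
  have hRE : ↑R ⊆ N.E := hE ▸ subset_insert l R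
  refine ⟨R, l, by exact_mod_cast (encard_coe_eq_coe_finsetCard R).symm.trans hX,
    ((hC _).2 (Or.inl rfl)).prop, hRE, fun S hS => ⟨fun hdep => ?_, fun h3 => ?_⟩⟩
  · obtain ⟨C, hCS, hCmin⟩ := hdep.exists_isCircuit_subset
    obtain rfl | ⟨-, hC3⟩ := (hC C).1 hCmin
    · exact absurd (hS (hCS rfl)) hl
    · have hle := encard_le_encard hCS
      rw [hC3, encard_coe_eq_coe_finsetCard] at hle
      exact_mod_cast hle
  · obtain ⟨C, hCS, hC3⟩ := Finset.exists_subset_card_eq h3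
    have hC : Circuit N ↑C := (hC _).2
      (Or.inr ⟨Finset.coe_subset.2 (hCS.trans hS), by rw [encard_coe_eq_coe_finsetCard, hC3]; rfl⟩)
    exact hC.prop.superset (Finset.coe_subset.2 hCS) ((Finset.coe_subset.2 hS).trans hRE)

/-- In a graph representing `U_{2,4}`, two triangles would differ in a two-element even set. -/
lemma not_represents_one (hR : R.card = 4) (hRE : ↑R ⊆ N.E)
    (hdep : ∀ S ⊆ R, (N.Dep ↑S ↔ 3 ≤ S.card)) {V : Type u} {inc : α → Sym2 V} :
    ¬ Represents 1 inc N := fun hinc => by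
  have hcard : ∀ S ⊆ R, (1 < (evenSubsets inc S).card ↔ 3 ≤ S.card) := fun S hS => by
    rw [← hinc S ((Finset.coe_subset.2 hS).trans hRE), hdep S hS]
  have htriangle : ∀ r ∈ R, IsEven inc (R.erase r) := fun r hr => by
    have h3 : (R.erase r).card = 3 := by rw [Finset.card_erase_of_mem hr, hR]
    have hrR := R.erase_subset r
    obtain ⟨A, hA, hAmin⟩ := one_lt_card_evenSubsets_iff.1 ((hcard _ hrR).2 h3.ge)
    have hA3 := (hcard A (hA.trans hrR)).1 (one_lt_card_evenSubsets_iff.2 ⟨A, subset_rfl, hAmin⟩)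
    exact Finset.eq_of_subset_of_card_le hA (h3.trans_le hA3) ▸ hAmin.prop.2
  obtain ⟨r, hr, s, hs, hrs⟩ := Finset.one_lt_card.1 (by omega : 1 < R.card)
  have hpair : R.erase r ∆ R.erase s = {r, s} := by
    ext x
    simp only [Finset.mem_symmDiff, Finset.mem_erase, Finset.mem_insert, Finset.mem_singleton]
    grind
  have heven := hpair ▸ (htriangle r hr).symmDiff (htriangle s hs)
  obtain ⟨A, hA, hAmin⟩ := heven.exists_isMinEven_subset (Finset.insert_nonempty r {s})
  have h3 := (hcard {r, s} (by grind)).1 (one_lt_card_evenSubsets_iff.2 ⟨A, hA, hAmin⟩)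
  exact absurd (h3.trans Finset.card_le_two) (by omega)

lemma Represents.not_dep_singleton {V : Type u} {inc : α → Sym2 V} (h : Represents 2 inc N) :
    ¬ N.Dep {l} := fun hl => by
  rw [← Finset.coe_singleton] at hl
  have hlt := (h {l} hl.subset_ground).1 hl
  have hle : (evenSubsets inc {l}).card ≤ 2 := Finset.card_filter_le _ _
  omega

lemma IsU24PlusLoop.not_inBL (h : IsU24PlusLoop N) : ¬ InBL N := by
  obtain ⟨R, l, hR, hl, hRE, hdep⟩ := h.exists_finset_dep_iff
  rw [inBL_iff]
  rintro (⟨-, V, inc, hinc⟩ | ⟨-, V, inc, hinc⟩)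
  · exact not_represents_one hR hRE hdep hinc
  · exact hinc.not_dep_singleton hl

lemma IsU24Expansion.dep_union_sdiff_iff (h : IsU24Expansion (fun F => M.Dep ↑F) X₀ R)
    (hX₀ : ↑X₀ ⊆ M.E) (hS : S ⊆ R) : M.Dep ↑(S ∪ X₀ \ R) ↔ 3 ≤ S.card := by
  have hsub : S ∪ X₀ \ R ⊆ X₀ := Finset.union_subset (hS.trans h.subset) Finset.sdiff_subset
  have hcard : (R \ S).card + S.card = 4 := h.card_eq ▸ Finset.card_sdiff_add_card_eq_card hS
  constructor
  · intro hdep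
    by_contra hlt
    obtain ⟨r, hr, s, hs, hrs⟩ := Finset.one_lt_card.1 (by omega : 1 < (R \ S).card)
    obtain ⟨hrR, hrS⟩ := Finset.mem_sdiff.1 hr
    obtain ⟨hsR, hsS⟩ := Finset.mem_sdiff.1 hs
    refine h.not_erase_erase r hrR s hsR hrs (hdep.superset (Finset.coe_subset.2 ?_) ?_)
    · grind
    · exact (Finset.coe_subset.2 (by grind)).trans hX₀
  · intro h3
    obtain ⟨r, hr⟩ : ∃ r ∈ R, R.erase r ⊆ S := by
      obtain h0 | h1 : (R \ S).card = 0 ∨ (R \ S).card = 1 := by omega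
      · obtain ⟨r, hr⟩ := Finset.card_pos.1 (by omega : 0 < S.card)
        exact ⟨r, hS hr, (R.erase_subset r).trans (Finset.sdiff_eq_empty_iff_subset.1
          (Finset.card_eq_zero.1 h0))⟩
      · obtain ⟨r, hr⟩ := Finset.card_eq_one.1 h1
        have hmem : ∀ x, x ∈ R ∧ x ∉ S ↔ x = r := by simpa [Finset.ext_iff] using hr
        exact ⟨r, ((hmem r).2 rfl).1, by grind⟩
    exact (h.erase r hr.1).superset (Finset.coe_subset.2 (by grind))
      ((Finset.coe_subset.2 hsub).trans hX₀)

lemma exists_isMinor_dep_iff {K F : Set α} (hK : M.Indep K) (hF : F ⊆ M.E) (hFK : Disjoint F K) :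
    ∃ N, IsMinor N M ∧ N.E = F ∧ ∀ J ⊆ F, (N.Dep J ↔ M.Dep (J ∪ K)) := by
  refine ⟨(M ／ K) ＼ (M.E \ F), ⟨K, M.E \ F, rfl⟩, ?_, fun J hJ => ?_⟩
  · rw [delete_ground, contract_ground, sdiff_sdiff_comm, sdiff_sdiff_cancel_left hF,
      hFK.sdiff_eq_left]
  · rw [delete_dep_iff, hK.contract_dep_iff]
    exact ⟨fun h => h.1.2, fun h => ⟨⟨hFK.mono_left hJ, h⟩, disjoint_sdiff_right.mono_left hJ⟩⟩

lemma IsKSep.dep_union_iff [M.RankFinite] {I J : Set α} (h : IsKSep M 1 X Y) (hIX : I ⊆ X)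
    (hJ : M.Indep J) (hJY : J ⊆ Y) : M.Dep (I ∪ J) ↔ M.Dep I := by
  refine ⟨fun hdep => by_contra fun hI => hdep.not_indep ?_, fun hI =>
    hI.superset subset_union_left (union_subset hI.subset_ground hJ.subset_ground)⟩
  exact h.indep_union ((not_dep_iff (hIX.trans h.subset_ground)).1 hI) hIX hJ hJY

lemma IsKSep.exists_isMinor_isU24PlusLoop [M.RankFinite] (h : IsKSep M 1 X Y)
    (hR : IsU24Expansion (fun F => M.Dep ↑F) X₀ R) (hX₀ : ↑X₀ ⊆ X) (hC : M.IsCircuit C)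
    (hCY : C ⊆ Y) : ∃ N, IsMinor N M ∧ IsU24PlusLoop N := by
  obtain ⟨l, hl⟩ := hC.nonempty
  have hX₀Y : ∀ x ∈ X₀, x ∉ Y := fun x hx => Set.disjoint_left.1 h.2.1 (hX₀ hx)
  have hlX₀ : l ∉ X₀ := fun hlX₀ => hX₀Y l hlX₀ (hCY hl)
  have hlR : l ∉ R := fun hlR => hlX₀ (hR.subset hlR)
  have hRE : ↑R ⊆ M.E := (Finset.coe_subset.2 hR.subset).trans (hX₀.trans h.subset_ground)
  have hdep : ∀ S ⊆ R, (M.Dep (↑S ∪ (↑(X₀ \ R) ∪ C \ {l})) ↔ 3 ≤ S.card) := fun S hS => by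
    rw [← union_assoc, ← Finset.coe_union, h.dep_union_iff _ (hC.sdiff_singleton_indep hl)
      (sdiff_subset.trans hCY), hR.dep_union_sdiff_iff (hX₀.trans h.subset_ground) hS]
    exact (Finset.coe_subset.2 (Finset.union_subset (hS.trans hR.subset)
      Finset.sdiff_subset)).trans hX₀
  have hK : M.Indep (↑(X₀ \ R) ∪ C \ {l}) := by
    rw [← not_dep_iff (union_subset ((Finset.coe_subset.2 Finset.sdiff_subset).trans
      (hX₀.trans h.subset_ground)) (sdiff_subset.trans hC.subset_ground))]
    simpa using hdep ∅ (Finset.empty_subset R)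
  obtain ⟨N, hNM, hNE, hN⟩ := exists_isMinor_dep_iff (F := insert l ↑R) hK
    (insert_subset (hC.subset_ground hl) hRE) (by
      simp only [Set.disjoint_left, mem_insert_iff, mem_union, mem_sdiff, Finset.mem_coe,
        Finset.mem_sdiff, mem_singleton_iff]
      have hRY : ∀ x ∈ R, x ∉ C := fun x hx hxC => hX₀Y x (hR.subset hx) (hCY hxC)
      grind)
  refine ⟨N, hNM, isU24PlusLoop_of_dep hlR hNE hR.card_eq ?_ fun S hS => ?_⟩
  · rw [hN _ (singleton_subset_iff.2 (mem_insert l _))]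
    refine hC.dep.superset (fun x hx => ?_)
      (union_subset (singleton_subset_iff.2 (hC.subset_ground hl)) hK.subset_ground)
    exact (em (x = l)).imp id fun hxl => Or.inr ⟨hx, hxl⟩
  · rw [hN _ ((Finset.coe_subset.2 hS).trans (subset_insert l _)), hdep S hS]

lemma exists_isU24Expansion_of_not_isRepresentable_one {E : Finset α} (hE : ↑E ⊆ M.E)
    (h2 : IsRepresentable 2 (M ↾ ↑E)) (h1 : ¬ IsRepresentable 1 (M ↾ ↑E)) :
    ∃ X₀ ⊆ E, ∃ R, IsU24Expansion (fun F => M.Dep ↑F) X₀ R := by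
  obtain ⟨hfin, V, inc, hinc⟩ := h2
  have hnot : ¬ LiftIsGraphicOn inc E := by
    rintro ⟨W, inc', h⟩
    refine h1 ⟨hfin, W, inc', fun C hC => ?_⟩
    rw [hinc C hC, h C (Finset.coe_subset.1 hC)]
  obtain ⟨X₀, hX₀, R, hR⟩ := exists_isU24Expansion_of_not_liftIsGraphicOn hnot
  have hdep : ∀ F ⊆ X₀, (M.Dep ↑F ↔ 2 < (evenSubsets inc F).card) := fun F hF => by
    have hFE : (F : Set α) ⊆ E := Finset.coe_subset.2 (hF.trans hX₀)
    rw [← hinc F hFE, dep_restrict_iff hFE hE]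
  refine ⟨X₀, hX₀, R, hR.subset, hR.card_eq, fun r hr => ?_, fun r hr s hs hrs => ?_⟩
  · exact (hdep _ (X₀.erase_subset r)).2 (hR.erase r hr)
  · rw [hdep _ ((Finset.erase_subset _ _).trans (X₀.erase_subset r))]
    exact hR.not_erase_erase r hr s hs hrs

lemma IsKSep.ssubset_ground {k : ℕ} (h : IsKSep M k X Y) (hk : k ≠ 0) : X ⊂ M.E := by
  obtain ⟨y, hy⟩ : Y.Nonempty := by
    rw [nonempty_iff_ne_empty]
    rintro rfl
    exact hk (by simpa using h.2.2.2.1)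
  exact (ssubset_iff_of_subset h.subset_ground).2
    ⟨y, h.symm.subset_ground hy, Set.disjoint_right.1 h.2.1 hy⟩

lemma ExcludedMinorBL.isU24PlusLoop_of_isKSep (hM : ExcludedMinorBL M) (h : IsKSep M 1 X Y)
    (hX : ¬ IsRepresentable 1 (M ↾ X)) : IsU24PlusLoop M := by
  have : M.Finite := ⟨hM.finite⟩
  have hX2 : IsRepresentable 2 (M ↾ X) :=
    (inBL_iff.1 (hM.2 _ (isStrictMinor_restrict (h.ssubset_ground one_ne_zero)))).resolve_left hX
  have hY : M.Dep Y := by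
    rw [← not_indep_iff h.symm.subset_ground]
    exact fun hY => hM.1 (inBL_iff.2 (Or.inr (h.isRepresentable_two hX2 hY)))
  obtain ⟨C, hCY, hC⟩ := hY.exists_isCircuit_subset
  obtain ⟨E, rfl⟩ := (hM.finite.subset h.subset_ground).exists_finset_coe
  obtain ⟨X₀, hX₀, R, hR⟩ := exists_isU24Expansion_of_not_isRepresentable_one h.subset_ground hX2 hX
  obtain ⟨N, hNM, hN⟩ := h.exists_isMinor_isU24PlusLoop hR (Finset.coe_subset.2 hX₀) hC hCY
  by_cases hne : N = M
  · exact hne ▸ hN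
  · exact absurd (hM.2 N ⟨hNM, hne⟩) hN.not_inBL

end U24PlusLoop

theorem statement_6 {α : Type u} (M : Matroid α) (hM : ExcludedMinorBL M) :
    MConnected M ∨ IsU24PlusLoop M := by
  refine or_iff_not_imp_left.2 fun hconn => ?_
  obtain ⟨X, Y, hsep⟩ := not_not.1 hconn
  have : M.Finite := ⟨hM.finite⟩
  by_cases hX : IsRepresentable 1 (M ↾ X)
  · by_cases hY : IsRepresentable 1 (M ↾ Y)
    · exact absurd (inBL_iff.2 (Or.inl (hsep.isRepresentable_one hX hY))) hM.1
    · exact hM.isU24PlusLoop_of_isKSep hsep.symm hY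
  · exact hM.isU24PlusLoop_of_isKSep hsep hX

end BLFormal
end
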